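/- arXiv:2310.19118 — 5 statements merged into one kernel-verified Lean document; each statement's English description precedes it below -/
import Mathlib

section
/- Let n ≥ 1 be an integer and s ∈ (0,1). Then the integral ∫_{ℝⁿ} (1 − cos ζ₁)/|ζ|^{n+2s} dζ is finite, where ζ₁ denotes the first coordinate of ζ ∈ ℝⁿ. -/
open MeasureTheory Filter Metric Set
open scoped Topology RealInnerProductSpace

/-! A power `‖x‖ ^ (-α)` is integrable near the origin of a `d`-dimensional space when `α < d`, and
near infinity when `d < α`. Since `0 ≤ 1 - cos t ≤ min (t ^ 2 / 2) 2`, the integrand is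
`O(‖ζ‖ ^ (-(n + 2 * s - 2)))` at the origin, where `s < 1` gives integrability, and
`O(‖ζ‖ ^ (-(n + 2 * s)))` at infinity, where `0 < s` does. -/

section PowerDecay

variable {E F : Type*} [NormedAddCommGroup E] [NormedSpace ℝ E] [FiniteDimensional ℝ E]
  [MeasurableSpace E] [BorelSpace E] [NormedAddCommGroup F]
  {μ : Measure E} [μ.IsAddHaarMeasure] {r α β : ℝ}

lemma integrableOn_norm_rpow_neg_compl_ball (hr : 0 < r) (hβ : Module.finrank ℝ E < β) :
    IntegrableOn (fun x : E ↦ ‖x‖ ^ (-β)) (ball 0 r)ᶜ μ := by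
  have hβ₀ : 0 < β := (Nat.cast_nonneg _).trans_lt hβ
  have hdom : Integrable (fun x : E ↦ (r⁻¹ + 1) ^ β * (1 + ‖x‖) ^ (-β)) μ :=
    (integrable_one_add_norm hβ).const_mul _
  refine hdom.integrableOn.mono' (Measurable.aestronglyMeasurable (by fun_prop)) ?_
  refine ae_restrict_of_forall_mem measurableSet_ball.compl fun x hx ↦ ?_
  have hrx : r ≤ ‖x‖ := by simpa using hx
  have hx₀ : 0 < ‖x‖ := hr.trans_le hrx
  have hle : 1 + ‖x‖ ≤ (r⁻¹ + 1) * ‖x‖ := by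
    have : 1 ≤ r⁻¹ * ‖x‖ := by rwa [inv_mul_eq_div, one_le_div hr]
    linarith
  calc ‖‖x‖ ^ (-β)‖ = (r⁻¹ + 1) ^ β * ((r⁻¹ + 1) * ‖x‖) ^ (-β) := by
        rw [Real.norm_of_nonneg (by positivity), Real.mul_rpow (by positivity) hx₀.le,
          ← mul_assoc, ← Real.rpow_add (by positivity), add_neg_cancel, Real.rpow_zero, one_mul]
    _ ≤ (r⁻¹ + 1) ^ β * (1 + ‖x‖) ^ (-β) :=
        mul_le_mul_of_nonneg_left
          (Real.rpow_le_rpow_of_nonpos (by positivity) hle (neg_nonpos.2 hβ₀.le)) (by positivity)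

lemma integrable_of_norm_le_rpow_of_norm_le_rpow [Nontrivial E] {f : E → F} {C D : ℝ} (hr : 0 < r)
    (hf : AEStronglyMeasurable f μ) (hα : α < Module.finrank ℝ E) (hβ : Module.finrank ℝ E < β)
    (hball : ∀ᵐ x ∂μ.restrict (ball 0 r), ‖f x‖ ≤ C * ‖x‖ ^ (-α))
    (hcompl : ∀ᵐ x ∂μ.restrict (ball 0 r)ᶜ, ‖f x‖ ≤ D * ‖x‖ ^ (-β)) :
    Integrable f μ := by
  rw [← integrableOn_univ, ← union_compl_self (ball (0 : E) r)]
  exact (integrableOn_ball_of_norm_le_rpow Module.finrank_pos hα hball hf).union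
    (((integrableOn_norm_rpow_neg_compl_ball hr hβ).const_mul D).mono' hf.restrict hcompl)

end PowerDecay

lemma abs_one_sub_cos_le_sq_div_two (t : ℝ) : |1 - Real.cos t| ≤ t ^ 2 / 2 := by
  rw [abs_of_nonneg (sub_nonneg.2 (Real.cos_le_one t))]
  linarith [Real.one_sub_sq_div_two_le_cos (x := t)]

lemma abs_one_sub_cos_le_two (t : ℝ) : |1 - Real.cos t| ≤ 2 := by
  rw [abs_of_nonneg (sub_nonneg.2 (Real.cos_le_one t))]
  linarith [Real.neg_one_le_cos t]

lemma norm_one_sub_cos_div_norm_rpow_le_two {E : Type*} [SeminormedAddCommGroup E] (t a : ℝ)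
    (x : E) : ‖(1 - Real.cos t) / ‖x‖ ^ a‖ ≤ 2 * ‖x‖ ^ (-a) := by
  have hpow : 0 ≤ ‖x‖ ^ a := by positivity
  rw [norm_div, Real.norm_eq_abs, Real.norm_of_nonneg hpow, Real.rpow_neg (norm_nonneg x),
    ← div_eq_mul_inv]
  gcongr
  exact abs_one_sub_cos_le_two t

section Functional

variable {E : Type*} [NormedAddCommGroup E] [NormedSpace ℝ E]

lemma norm_one_sub_cos_div_norm_rpow_le_sq_opNorm (L : E →L[ℝ] ℝ) (a : ℝ) {x : E} (hx : x ≠ 0) :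
    ‖(1 - Real.cos (L x)) / ‖x‖ ^ a‖ ≤ ‖L‖ ^ 2 / 2 * ‖x‖ ^ (-(a - 2)) := by
  have hx₀ : 0 < ‖x‖ := norm_pos_iff.2 hx
  have hL : (L x) ^ 2 ≤ (‖L‖ * ‖x‖) ^ 2 := sq_le_sq' (neg_le_of_abs_le (L.le_opNorm x))
    (le_of_abs_le (L.le_opNorm x))
  calc ‖(1 - Real.cos (L x)) / ‖x‖ ^ a‖ = |1 - Real.cos (L x)| / ‖x‖ ^ a := by
        rw [norm_div, Real.norm_eq_abs, Real.norm_of_nonneg (by positivity)]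
    _ ≤ (‖L‖ * ‖x‖) ^ 2 / 2 / ‖x‖ ^ a := by
        gcongr
        exact (abs_one_sub_cos_le_sq_div_two _).trans (by gcongr)
    _ = ‖L‖ ^ 2 / 2 * ‖x‖ ^ (-(a - 2)) := by
        rw [neg_sub, Real.rpow_sub hx₀, Real.rpow_two]
        ring

theorem fractional_normalization_constant_finite_general [FiniteDimensional ℝ E] [Nontrivial E]
    [MeasurableSpace E] [BorelSpace E] (μ : Measure E) [μ.IsAddHaarMeasure] (L : E →L[ℝ] ℝ)
    {s : ℝ} (hs : s ∈ Ioo (0 : ℝ) 1) :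
    Integrable (fun x ↦ (1 - Real.cos (L x)) / ‖x‖ ^ ((Module.finrank ℝ E : ℝ) + 2 * s)) μ := by
  obtain ⟨hs₀, hs₁⟩ := hs
  refine integrable_of_norm_le_rpow_of_norm_le_rpow (C := ‖L‖ ^ 2 / 2) (D := 2) one_pos
    (Measurable.aestronglyMeasurable (by fun_prop))
    (α := Module.finrank ℝ E + 2 * s - 2) (β := Module.finrank ℝ E + 2 * s)
    (by linarith) (by linarith) ?_ (ae_of_all _ fun x ↦ ?_)
  · filter_upwards [ae_restrict_of_ae (μ.ae_ne 0)] with x hx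
    exact norm_one_sub_cos_div_norm_rpow_le_sq_opNorm L _ hx
  · exact norm_one_sub_cos_div_norm_rpow_le_two (L x) _ x

end Functional

/-- For `n ≥ 1` and `s ∈ (0,1)`, the integral
`∫_{ℝⁿ} (1 − cos ζ₁)/|ζ|^{n+2s} dζ` is finite (the integrand is nonnegative,
so finiteness is equivalent to integrability). -/
theorem fractional_normalization_constant_finite
    (n : ℕ) (hn : 1 ≤ n) (s : ℝ) (hs : s ∈ Set.Ioo (0:ℝ) 1) :
    MeasureTheory.Integrable (fun ζ : EuclideanSpace ℝ (Fin n) =>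
      (1 - Real.cos (ζ ⟨0, hn⟩)) / ‖ζ‖ ^ ((n : ℝ) + 2 * s)) := by
  have : Nonempty (Fin n) := ⟨⟨0, hn⟩⟩
  simpa using fractional_normalization_constant_finite_general volume
    (EuclideanSpace.proj (⟨0, hn⟩ : Fin n)) hs
end

section
/- Let n ≥ 1 and s ∈ (0,1). Then ∫_{ℝⁿ} (1 − cos ζ₁)/|ζ|^{n+2s} dζ = π^{n/2} Γ(1−s) / (s 4^s Γ((n+2s)/2)), where ζ₁ is the first coordinate of ζ; equivalently, the normalization constant c_{n,s} := (∫_{ℝⁿ} (1 − cos ζ₁)/|ζ|^{n+2s} dζ)^{-1} equals s 4^s Γ((n+2s)/2) / (π^{n/2} Γ(1−s)). -/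
open MeasureTheory Filter Metric Set
open scoped Topology

/-!
The Gamma integral `Γ(p/2) / |ζ|^p = ∫₀^∞ t^(p/2-1) e^(-t|ζ|²) dt` writes the power weight as a
mixture of Gaussians. By Tonelli it remains to integrate `1 - cos ⟪w, ζ⟫` against a Gaussian, which
is its Fourier transform at `0` minus that at `w`, and then to integrate
`t^(s-1) (1 - e^(-c/t))` with `c = |w|²/4`. In the latter, `1 - e^(-c/t)` is the probability that
`T⁻¹ ≥ t` for an exponential variable `T` of rate `c`, so by the layer cake formula the integral is
`E[T^(-s)] / s = c^s Γ(1-s) / s`.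
-/

open ProbabilityTheory Module
open scoped RealInnerProductSpace

section GammaIntegrals

lemma lintegral_rpow_mul_exp_neg_mul_Ioi {a r : ℝ} (ha : 0 < a) (hr : 0 < r) :
    ∫⁻ t in Ioi (0 : ℝ), ENNReal.ofReal (t ^ (a - 1) * Real.exp (-(r * t)))
      = ENNReal.ofReal (Real.Gamma a / r ^ a) := by
  have h_integral := Real.integral_rpow_mul_exp_neg_mul_Ioi ha hr
  have h_pos : 0 < (1 / r) ^ a * Real.Gamma a :=
    mul_pos (by positivity) (Real.Gamma_pos_of_pos ha)
  have h_integrable : IntegrableOn (fun t ↦ t ^ (a - 1) * Real.exp (-(r * t))) (Ioi 0) :=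
    .of_integral_ne_zero (h_integral ▸ h_pos.ne')
  have h_nonneg : 0 ≤ᵐ[volume.restrict (Ioi 0)] fun t ↦ t ^ (a - 1) * Real.exp (-(r * t)) := by
    filter_upwards [ae_restrict_mem measurableSet_Ioi] with t ht
    exact mul_nonneg (Real.rpow_nonneg (mem_Ioi.1 ht).le _) (Real.exp_pos _).le
  rw [← ofReal_integral_eq_lintegral_ofReal h_integrable h_nonneg, h_integral,
    Real.div_rpow zero_le_one hr.le, Real.one_rpow, one_div_mul_eq_div]

lemma expMeasure_Ioc_zero {c x : ℝ} (hc : 0 < c) (hx : 0 ≤ x) :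
    expMeasure c (Ioc 0 x) = ENNReal.ofReal (1 - Real.exp (-(c * x))) := by
  have := isProbabilityMeasure_expMeasure hc
  rw [← measure_cdf (expMeasure c), StieltjesFunction.measure_Ioc, cdf_expMeasure_eq hc,
    cdf_expMeasure_eq hc, if_pos hx, if_pos le_rfl]
  simp only [mul_zero, neg_zero, Real.exp_zero, sub_self, sub_zero]

lemma ae_expMeasure_pos {c : ℝ} (hc : 0 < c) : ∀ᵐ x ∂expMeasure c, 0 < x := by
  have := isProbabilityMeasure_expMeasure hc
  have h_Iic : expMeasure c (Iic 0) = 0 := by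
    rw [← ofReal_cdf, cdf_expMeasure_eq hc]
    simp
  simpa only [ae_iff, not_lt] using! h_Iic

lemma lintegral_rpow_expMeasure {c p : ℝ} (hc : 0 < c) (hp : -1 < p) :
    ∫⁻ x, ENNReal.ofReal (x ^ p) ∂expMeasure c = ENNReal.ofReal (Real.Gamma (p + 1) / c ^ p) := by
  have h_density : ∀ x ∈ Ioi (0 : ℝ), exponentialPDF c x * ENNReal.ofReal (x ^ p) =
      ENNReal.ofReal c * ENNReal.ofReal (x ^ (p + 1 - 1) * Real.exp (-(c * x))) := by
    intro x (hx : 0 < x)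
    rw [exponentialPDF_of_nonneg hx.le, ← ENNReal.ofReal_mul (by positivity),
      ← ENNReal.ofReal_mul hc.le, add_sub_cancel_right]
    ring_nf
  calc ∫⁻ x, ENNReal.ofReal (x ^ p) ∂expMeasure c
      = ∫⁻ x in Ioi 0, ENNReal.ofReal (x ^ p) ∂volume.withDensity (exponentialPDF c) := by
        conv_lhs => rw [← Measure.restrict_eq_self_of_ae_mem (ae_expMeasure_pos hc)]
        rfl
    _ = ∫⁻ x in Ioi 0, exponentialPDF c x * ENNReal.ofReal (x ^ p) :=
        setLIntegral_withDensity_eq_setLIntegral_mul _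
          (measurable_exponentialPDFReal c).ennreal_ofReal (by fun_prop) measurableSet_Ioi
    _ = ENNReal.ofReal (c * (Real.Gamma (p + 1) / c ^ (p + 1))) := by
        rw [setLIntegral_congr_fun measurableSet_Ioi h_density,
          lintegral_const_mul' _ _ ENNReal.ofReal_ne_top,
          lintegral_rpow_mul_exp_neg_mul_Ioi (by linarith) hc, ← ENNReal.ofReal_mul hc.le]
    _ = ENNReal.ofReal (Real.Gamma (p + 1) / c ^ p) := by
        rw [Real.rpow_add_one hc.ne']
        field_simp

lemma lintegral_rpow_mul_one_sub_exp_neg_div_Ioi {c s : ℝ} (hc : 0 < c) (hs : s ∈ Ioo 0 1) :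
    ∫⁻ t in Ioi (0 : ℝ), ENNReal.ofReal (t ^ (s - 1) * (1 - Real.exp (-(c / t))))
      = ENNReal.ofReal (c ^ s * Real.Gamma (1 - s) / s) := by
  obtain ⟨hs_pos, hs_lt⟩ := hs
  have h_tail : ∀ t ∈ Ioi (0 : ℝ),
      expMeasure c {x | t ≤ x⁻¹} * ENNReal.ofReal (t ^ (s - 1))
        = ENNReal.ofReal (t ^ (s - 1) * (1 - Real.exp (-(c / t)))) := by
    intro t (ht : 0 < t)
    have h_set : {x : ℝ | t ≤ x⁻¹} = Ioc 0 t⁻¹ := by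
      ext x
      exact ⟨fun h ↦ have hx := inv_pos.1 (ht.trans_le h); ⟨hx, (le_inv_comm₀ ht hx).1 h⟩,
        fun h ↦ (le_inv_comm₀ ht h.1).2 h.2⟩
    rw [h_set, expMeasure_Ioc_zero hc (by positivity), ← div_eq_mul_inv, mul_comm,
      ENNReal.ofReal_mul (by positivity)]
  have h_moment : ∫⁻ x, ENNReal.ofReal (x⁻¹ ^ s) ∂expMeasure c
      = ENNReal.ofReal (c ^ s * Real.Gamma (1 - s)) := by
    calc ∫⁻ x, ENNReal.ofReal (x⁻¹ ^ s) ∂expMeasure c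
        = ∫⁻ x, ENNReal.ofReal (x ^ (-s)) ∂expMeasure c := by
          refine lintegral_congr_ae ?_
          filter_upwards [ae_expMeasure_pos hc] with x hx
          rw [Real.inv_rpow hx.le, Real.rpow_neg hx.le]
      _ = ENNReal.ofReal (c ^ s * Real.Gamma (1 - s)) := by
          rw [lintegral_rpow_expMeasure hc (by linarith), Real.rpow_neg hc.le, div_inv_eq_mul,
            neg_add_eq_sub, mul_comm]
  have h_layercake := lintegral_rpow_eq_lintegral_meas_le_mul (expMeasure c)
    ((ae_expMeasure_pos hc).mono fun x hx ↦ (inv_pos.2 hx).le) (by fun_prop) hs_pos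
  rw [setLIntegral_congr_fun measurableSet_Ioi h_tail, h_moment] at h_layercake
  rw [ENNReal.ofReal_div_of_pos hs_pos, h_layercake, mul_comm,
    ENNReal.mul_div_cancel_right (by simpa) ENNReal.ofReal_ne_top]

end GammaIntegrals

lemma Gamma_mul_lintegral_div_norm_rpow {E : Type*} [NormedAddCommGroup E] [MeasurableSpace E]
    [OpensMeasurableSpace E] {μ : Measure E} [SFinite μ] {f : E → ℝ} (hf : AEMeasurable f μ)
    (hf_zero : f 0 = 0) {p : ℝ} (hp : 0 < p) :
    ENNReal.ofReal (Real.Gamma (p / 2)) * ∫⁻ v, ENNReal.ofReal (f v / ‖v‖ ^ p) ∂μ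
      = ∫⁻ t in Ioi (0 : ℝ), ENNReal.ofReal (t ^ (p / 2 - 1)) *
          ∫⁻ v, ENNReal.ofReal (f v * Real.exp (-t * ‖v‖ ^ 2)) ∂μ := by
  have h_weight (v : E) :
      ENNReal.ofReal (Real.Gamma (p / 2)) * ENNReal.ofReal (f v / ‖v‖ ^ p)
        = ∫⁻ t in Ioi (0 : ℝ), ENNReal.ofReal (f v) *
            ENNReal.ofReal (t ^ (p / 2 - 1) * Real.exp (-(‖v‖ ^ 2 * t))) := by
    obtain rfl | hv := eq_or_ne v 0
    · simp [hf_zero]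
    have h_norm : (‖v‖ ^ 2) ^ (p / 2) = ‖v‖ ^ p := by
      rw [← Real.rpow_natCast, ← Real.rpow_mul (norm_nonneg v)]
      congr 1
      push_cast
      ring
    rw [lintegral_const_mul' _ _ ENNReal.ofReal_ne_top,
      lintegral_rpow_mul_exp_neg_mul_Ioi (by positivity) (by positivity), h_norm,
      ← ENNReal.ofReal_mul (Real.Gamma_nonneg_of_nonneg (by positivity)),
      ← ENNReal.ofReal_mul' (div_nonneg (Real.Gamma_nonneg_of_nonneg (by positivity))
        (by positivity)), mul_div_left_comm]
  have h_gauss : ∀ t ∈ Ioi (0 : ℝ),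
      ∫⁻ v, ENNReal.ofReal (f v) *
          ENNReal.ofReal (t ^ (p / 2 - 1) * Real.exp (-(‖v‖ ^ 2 * t))) ∂μ
        = ENNReal.ofReal (t ^ (p / 2 - 1)) *
            ∫⁻ v, ENNReal.ofReal (f v * Real.exp (-t * ‖v‖ ^ 2)) ∂μ := by
    intro t (ht : 0 < t)
    rw [← lintegral_const_mul' _ _ ENNReal.ofReal_ne_top]
    refine lintegral_congr fun v ↦ ?_
    rw [ENNReal.ofReal_mul (by positivity), ENNReal.ofReal_mul' (Real.exp_pos _).le,
      mul_left_comm, neg_mul, mul_comm t]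
  rw [← lintegral_const_mul' _ _ ENNReal.ofReal_ne_top, lintegral_congr h_weight,
    lintegral_lintegral_swap (hf.comp_fst.ennreal_ofReal.mul (by fun_prop)),
    setLIntegral_congr_fun measurableSet_Ioi h_gauss]

section InnerProductSpace

variable {V : Type*} [NormedAddCommGroup V] [InnerProductSpace ℝ V]

lemma re_cexp_neg_mul_sq_norm_add_I_mul_inner (t : ℝ) (w v : V) :
    (Complex.exp (-t * ‖v‖ ^ 2 + Complex.I * ⟪w, v⟫)).re
      = Real.cos ⟪w, v⟫ * Real.exp (-t * ‖v‖ ^ 2) := by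
  have h_arg : -t * ‖v‖ ^ 2 + Complex.I * ⟪w, v⟫
      = ((-t * ‖v‖ ^ 2 : ℝ) : ℂ) + (⟪w, v⟫ : ℝ) * Complex.I := by
    push_cast
    ring
  rw [h_arg, Complex.exp_re, mul_comm]
  simp only [Complex.add_re, Complex.add_im, Complex.ofReal_re, Complex.ofReal_im,
    Complex.re_ofReal_mul, Complex.im_ofReal_mul, Complex.I_re, Complex.I_im, mul_zero, mul_one,
    add_zero, zero_add]

variable [FiniteDimensional ℝ V] [MeasurableSpace V] [BorelSpace V]

lemma integrable_cos_inner_mul_exp_neg_mul_sq_norm {t : ℝ} (ht : 0 < t) (w : V) :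
    Integrable fun v : V ↦ Real.cos ⟪w, v⟫ * Real.exp (-t * ‖v‖ ^ 2) := by
  simpa only [RCLike.re_to_complex, re_cexp_neg_mul_sq_norm_add_I_mul_inner] using
    (GaussianFourier.integrable_cexp_neg_mul_sq_norm_add
      (b := (t : ℂ)) (by simpa) Complex.I w).re

lemma integral_cos_inner_mul_exp_neg_mul_sq_norm {t : ℝ} (ht : 0 < t) (w : V) :
    ∫ v : V, Real.cos ⟪w, v⟫ * Real.exp (-t * ‖v‖ ^ 2)
      = (Real.pi / t) ^ (finrank ℝ V / 2 : ℝ) * Real.exp (-(‖w‖ ^ 2 / 4 / t)) := by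
  have hb : 0 < (t : ℂ).re := by simpa
  have h_re := integral_re (GaussianFourier.integrable_cexp_neg_mul_sq_norm_add hb Complex.I w)
  have h_value : ((Real.pi : ℂ) / t) ^ (finrank ℝ V / 2 : ℂ) *
      Complex.exp (Complex.I ^ 2 * ‖w‖ ^ 2 / (4 * t))
      = ((Real.pi / t) ^ (finrank ℝ V / 2 : ℝ) * Real.exp (-(‖w‖ ^ 2 / 4 / t)) : ℝ) := by
    push_cast
    rw [Complex.ofReal_cpow (by positivity), Complex.I_sq]
    push_cast
    ring_nf
  rw [GaussianFourier.integral_cexp_neg_mul_sq_norm_add hb, h_value] at h_re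
  simpa only [RCLike.re_to_complex, re_cexp_neg_mul_sq_norm_add_I_mul_inner,
    Complex.ofReal_re] using h_re

lemma lintegral_one_sub_cos_inner_mul_exp_neg_mul_sq_norm {t : ℝ} (ht : 0 < t) (w : V) :
    ∫⁻ v : V, ENNReal.ofReal ((1 - Real.cos ⟪w, v⟫) * Real.exp (-t * ‖v‖ ^ 2))
      = ENNReal.ofReal ((Real.pi / t) ^ (finrank ℝ V / 2 : ℝ) *
          (1 - Real.exp (-(‖w‖ ^ 2 / 4 / t)))) := by
  have h_cos := integrable_cos_inner_mul_exp_neg_mul_sq_norm ht w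
  have h_one : Integrable fun v : V ↦ Real.exp (-t * ‖v‖ ^ 2) := by
    simpa using integrable_cos_inner_mul_exp_neg_mul_sq_norm ht (0 : V)
  have h_nonneg (v : V) : 0 ≤ (1 - Real.cos ⟪w, v⟫) * Real.exp (-t * ‖v‖ ^ 2) :=
    mul_nonneg (sub_nonneg.2 (Real.cos_le_one _)) (Real.exp_pos _).le
  simp only [sub_mul, one_mul] at h_nonneg ⊢
  rw [← ofReal_integral_eq_lintegral_ofReal (by exact h_one.sub h_cos) (ae_of_all _ h_nonneg),
    integral_sub h_one h_cos, GaussianFourier.integral_rexp_neg_mul_sq_norm ht,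
    integral_cos_inner_mul_exp_neg_mul_sq_norm ht, mul_one_sub]

lemma Gamma_mul_lintegral_one_sub_cos_inner_div_norm_rpow {s : ℝ} (hs : s ∈ Ioo 0 1) {w : V}
    (hw : w ≠ 0) :
    ENNReal.ofReal (Real.Gamma ((finrank ℝ V + 2 * s) / 2)) *
        ∫⁻ v : V, ENNReal.ofReal ((1 - Real.cos ⟪w, v⟫) / ‖v‖ ^ (finrank ℝ V + 2 * s))
      = ENNReal.ofReal (Real.pi ^ (finrank ℝ V / 2 : ℝ) *
          ((‖w‖ ^ 2 / 4) ^ s * Real.Gamma (1 - s) / s)) := by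
  have hs_pos := hs.1
  have h_inner : ∀ t ∈ Ioi (0 : ℝ),
      ENNReal.ofReal (t ^ ((finrank ℝ V + 2 * s) / 2 - 1)) *
          ∫⁻ v : V, ENNReal.ofReal ((1 - Real.cos ⟪w, v⟫) * Real.exp (-t * ‖v‖ ^ 2))
        = ENNReal.ofReal (Real.pi ^ (finrank ℝ V / 2 : ℝ)) *
            ENNReal.ofReal (t ^ (s - 1) * (1 - Real.exp (-(‖w‖ ^ 2 / 4 / t)))) := by
    intro t (ht : 0 < t)
    have h_rpow : t ^ ((finrank ℝ V + 2 * s) / 2 - 1) * (Real.pi / t) ^ (finrank ℝ V / 2 : ℝ)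
        = Real.pi ^ (finrank ℝ V / 2 : ℝ) * t ^ (s - 1) := by
      rw [show (finrank ℝ V + 2 * s) / 2 - 1 = (s - 1) + finrank ℝ V / 2 by ring,
        Real.rpow_add ht, Real.div_rpow Real.pi_pos.le ht.le]
      field_simp
    rw [lintegral_one_sub_cos_inner_mul_exp_neg_mul_sq_norm ht,
      ← ENNReal.ofReal_mul (by positivity), ← ENNReal.ofReal_mul (by positivity), ← mul_assoc,
      h_rpow, mul_assoc]
  rw [Gamma_mul_lintegral_div_norm_rpow (by fun_prop) (by simp) (by positivity),
    setLIntegral_congr_fun measurableSet_Ioi h_inner,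
    lintegral_const_mul' _ _ ENNReal.ofReal_ne_top,
    lintegral_rpow_mul_one_sub_exp_neg_div_Ioi (by positivity) hs,
    ← ENNReal.ofReal_mul (by positivity)]

theorem fractional_normalization_constant_value_general {s : ℝ} (hs : s ∈ Ioo 0 1) (w : V) :
    ∫ v : V, (1 - Real.cos ⟪w, v⟫) / ‖v‖ ^ (finrank ℝ V + 2 * s)
      = Real.pi ^ (finrank ℝ V / 2 : ℝ) * Real.Gamma (1 - s) /
          (s * 4 ^ s * Real.Gamma ((finrank ℝ V + 2 * s) / 2)) * ‖w‖ ^ (2 * s) := by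
  have hs_pos := hs.1
  obtain rfl | hw := eq_or_ne w 0
  · simp [Real.zero_rpow, hs_pos.ne']
  have h_Gamma : 0 < Real.Gamma ((finrank ℝ V + 2 * s) / 2) :=
    Real.Gamma_pos_of_pos (by positivity)
  have : 0 < Real.Gamma (1 - s) := Real.Gamma_pos_of_pos (sub_pos.2 hs.2)
  have h_norm : (‖w‖ ^ 2 / 4) ^ s = ‖w‖ ^ (2 * s) / 4 ^ s := by
    rw [Real.div_rpow (by positivity) (by norm_num), Real.rpow_mul (norm_nonneg w), Real.rpow_two]
  have h_toReal := congrArg ENNReal.toReal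
    (Gamma_mul_lintegral_one_sub_cos_inner_div_norm_rpow hs hw)
  rw [ENNReal.toReal_mul, ENNReal.toReal_ofReal h_Gamma.le, ENNReal.toReal_ofReal (by positivity),
    h_norm] at h_toReal
  rw [integral_eq_lintegral_of_nonneg_ae
    (ae_of_all _ fun v ↦ div_nonneg (sub_nonneg.2 (Real.cos_le_one _)) (by positivity))
    (Measurable.aestronglyMeasurable (by fun_prop)), ← mul_right_inj' h_Gamma.ne', h_toReal]
  field_simp

end InnerProductSpace

/-- For `n ≥ 1` and `s ∈ (0,1)`,
`∫_{ℝⁿ} (1 − cos ζ₁)/|ζ|^{n+2s} dζ = π^{n/2} Γ(1−s) / (s 4^s Γ((n+2s)/2))`,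
i.e. the normalization constant `c_{n,s}` equals `s 4^s Γ((n+2s)/2)/(π^{n/2} Γ(1−s))`. -/
theorem fractional_normalization_constant_value
    (n : ℕ) (hn : 1 ≤ n) (s : ℝ) (hs : s ∈ Set.Ioo (0:ℝ) 1) :
    ∫ ζ : EuclideanSpace ℝ (Fin n),
        (1 - Real.cos (ζ ⟨0, hn⟩)) / ‖ζ‖ ^ ((n : ℝ) + 2 * s)
      = Real.pi ^ ((n : ℝ) / 2) * Real.Gamma (1 - s) /
          (s * (4 : ℝ) ^ s * Real.Gamma (((n : ℝ) + 2 * s) / 2)) := by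
  simpa [EuclideanSpace.inner_single_left] using
    fractional_normalization_constant_value_general (V := EuclideanSpace ℝ (Fin n)) hs
      (EuclideanSpace.single ⟨0, hn⟩ 1)
end

section
/- Let s ∈ (0,1) and define u : ℝ → ℝ by u(x) = (max(x,0))^s. Then: (i) for every x > 0, the principal value limit lim_{ε→0⁺} ∫_{{y : |y−x| > ε}} (u(x) − u(y))/|x−y|^{1+2s} dy exists and equals 0 (i.e., u is s-harmonic on (0,∞)); and (ii) there exists a constant C > 0 depending only on s such that for every x < 0 the integral ∫_{ℝ} (u(x) − u(y))/|x−y|^{1+2s} dy converges absolutely and equals −C |x|^{−s}. -/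
open MeasureTheory Filter Metric Set
open scoped Topology

/-!
Homogeneity of `u = (x₊)^s` reduces everything to the points `1` and `-1`; at `-1` the integrand has
a sign and is dominated by `(1 + |y|)^{-(1+s)}`. At `1`, write `q` for the integrand.
The inversion `y = t⁻¹` turns the part of the integral over `y > 1 + ε` into
`-∫ t^{s-1} q(t)` over `(0, (1+ε)⁻¹)`, again by homogeneity, while `(1 - t^{s-1}) q(t)` has the
explicit primitive `(1 - t^s)² (1-t)^{-2s} / (2s)`. The value of this primitive at `0` cancels the
integral over `y ≤ 0`, so what remains is its value at `1 - ε` and an integral over the interval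
`[1 - ε, (1+ε)⁻¹]` of length `O(ε²)`. Both are `O(ε^{2-2s})`.
-/

open scoped Pointwise

section FractionalLaplacian

variable {E : Type*} [NormedAddCommGroup E] [NormedSpace ℝ E]

/-- The integrand `(u(x) - u(y)) / |x - y|^{n+2s}`, `n = dim E`, of the fractional Laplacian of `u`
at `x`, without normalising constant. On the diagonal `y = x` it is `0`. -/
noncomputable def fracDiffQuotient (s : ℝ) (u : E → ℝ) (x y : E) : ℝ :=
  (u x - u y) / ‖x - y‖ ^ (Module.finrank ℝ E + 2 * s)

/-- `u` is `s`-harmonic at `x`: the principal value integral of its `fracDiffQuotient` is `0`.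
The truncated integrals are Bochner integrals, so a truncated integrand which is not integrable
contributes the value `0`. -/
def IsFracHarmonicAt [MeasureSpace E] (s : ℝ) (u : E → ℝ) (x : E) : Prop :=
  Tendsto (fun ε : ℝ => ∫ y in {y : E | ε < ‖y - x‖}, fracDiffQuotient s u x y) (𝓝[>] 0) (𝓝 0)

variable {s p r : ℝ} {u : E → ℝ}

theorem fracDiffQuotient_swap (s : ℝ) (u : E → ℝ) (x y : E) :
    fracDiffQuotient s u x y = -fracDiffQuotient s u y x := by
  rw [fracDiffQuotient, fracDiffQuotient, norm_sub_rev, ← neg_div, neg_sub]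

theorem fracDiffQuotient_smul_smul (hr : 0 < r) (hu : ∀ z, u (r • z) = r ^ p * u z) (x y : E) :
    fracDiffQuotient s u (r • x) (r • y) =
      r ^ (p - (Module.finrank ℝ E + 2 * s)) * fracDiffQuotient s u x y := by
  simp only [fracDiffQuotient]
  rw [hu, hu, ← smul_sub, norm_smul, Real.norm_of_nonneg hr.le,
    Real.mul_rpow hr.le (norm_nonneg _), ← mul_sub, mul_div_mul_comm, ← Real.rpow_sub hr]

theorem continuousOn_fracDiffQuotient (hu : Continuous u) (s : ℝ) (x : E) :
    ContinuousOn (fracDiffQuotient s u x) {x}ᶜ := by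
  have norm_ne_zero : ∀ y ∈ ({x}ᶜ : Set E), ‖x - y‖ ≠ 0 := fun y hy =>
    norm_ne_zero_iff.2 (sub_ne_zero.2 (Ne.symm hy))
  refine (by fun_prop : ContinuousOn (fun y => u x - u y) _).div ?_ fun y hy => ?_
  · exact (by fun_prop : ContinuousOn (fun y => ‖x - y‖) _).rpow_const
      fun y hy => Or.inl (norm_ne_zero y hy)
  · exact (Real.rpow_pos_of_pos ((norm_nonneg _).lt_of_ne' (norm_ne_zero y hy)) _).ne'

theorem measurable_fracDiffQuotient [MeasurableSpace E] [BorelSpace E] (hu : Measurable u)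
    (s : ℝ) (x : E) : Measurable (fracDiffQuotient s u x) := by
  unfold fracDiffQuotient
  fun_prop

section Dilation

variable [FiniteDimensional ℝ E] [MeasurableSpace E] [BorelSpace E]
  {μ : Measure E} [μ.IsAddHaarMeasure]

theorem integrable_fracDiffQuotient_smul {x : E} (hr : 0 < r)
    (hu : ∀ z, u (r • z) = r ^ p * u z) (hx : Integrable (fracDiffQuotient s u x) μ) :
    Integrable (fracDiffQuotient s u (r • x)) μ := by
  rw [← integrable_comp_smul_iff μ _ hr.ne']
  simpa only [fracDiffQuotient_smul_smul hr hu] using hx.const_mul _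

theorem setIntegral_smul_fracDiffQuotient_smul (hr : 0 < r) (hu : ∀ z, u (r • z) = r ^ p * u z)
    (x : E) (A : Set E) :
    ∫ y in r • A, fracDiffQuotient s u (r • x) y ∂μ =
      r ^ (p - 2 * s) * ∫ y in A, fracDiffQuotient s u x y ∂μ := by
  have change_of_variables :=
    Measure.setIntegral_comp_smul_of_pos μ (fracDiffQuotient s u (r • x)) A hr
  simp only [fracDiffQuotient_smul_smul hr hu, integral_const_mul, smul_eq_mul]
    at change_of_variables
  rw [eq_inv_mul_iff_mul_eq₀ (by positivity), ← mul_assoc, ← Real.rpow_natCast,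
    ← Real.rpow_add hr] at change_of_variables
  rw [← change_of_variables]
  congr 2
  ring

theorem integral_fracDiffQuotient_smul (hr : 0 < r) (hu : ∀ z, u (r • z) = r ^ p * u z) (x : E) :
    ∫ y, fracDiffQuotient s u (r • x) y ∂μ =
      r ^ (p - 2 * s) * ∫ y, fracDiffQuotient s u x y ∂μ := by
  simpa only [smul_set_univ₀ hr.ne', setIntegral_univ] using
    setIntegral_smul_fracDiffQuotient_smul (μ := μ) (s := s) hr hu x univ

end Dilation

theorem IsFracHarmonicAt.smul [FiniteDimensional ℝ E] [MeasureSpace E] [BorelSpace E]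
    [(volume : Measure E).IsAddHaarMeasure] {x : E} (hr : 0 < r)
    (hu : ∀ z, u (r • z) = r ^ p * u z) (hx : IsFracHarmonicAt s u x) :
    IsFracHarmonicAt s u (r • x) := by
  have dilate (ε : ℝ) :
      {y : E | ε < ‖y - r • x‖} = r • {y : E | ε / r < ‖y - x‖} := by
    ext y
    have norm_eq : ‖y - r • x‖ = r * ‖r⁻¹ • y - x‖ := by
      rw [← norm_smul_of_nonneg hr.le, smul_sub, smul_inv_smul₀ hr.ne']
    rw [mem_smul_set_iff_inv_smul_mem₀ hr.ne', mem_ofPred_eq, mem_ofPred_eq, div_lt_iff₀' hr,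
      norm_eq]
  have rescale : Tendsto (fun ε : ℝ => ε / r) (𝓝[>] 0) (𝓝[>] 0) :=
    tendsto_nhdsWithin_of_tendsto_nhds_of_eventually_within _
      ((continuous_id.div_const r).tendsto' 0 0 (zero_div r) |>.mono_left nhdsWithin_le_nhds)
      (eventually_mem_nhdsWithin.mono fun _ hε => div_pos hε hr)
  simpa only [IsFracHarmonicAt, dilate, setIntegral_smul_fracDiffQuotient_smul hr hu, mul_zero,
    Function.comp_def] using (hx.comp rescale).const_mul (r ^ (p - 2 * s))

end FractionalLaplacian

section ChangeOfVariables

variable {F : Type*} [NormedAddCommGroup F] [NormedSpace ℝ F] {A : Set ℝ}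

theorem integrableOn_inv_iff (hA : MeasurableSet A) (hA0 : (0 : ℝ) ∉ A) (f : ℝ → F) :
    IntegrableOn f A⁻¹ ↔ IntegrableOn (fun t => (t ^ 2)⁻¹ • f t⁻¹) A := by
  rw [← image_inv_eq_inv, integrableOn_image_iff_integrableOn_abs_deriv_smul hA
    (fun t ht => (hasDerivAt_inv (ne_of_mem_of_not_mem ht hA0)).hasDerivWithinAt)
    inv_injective.injOn]
  simp

theorem setIntegral_inv (hA : MeasurableSet A) (hA0 : (0 : ℝ) ∉ A) (f : ℝ → F) :
    ∫ y in A⁻¹, f y = ∫ t in A, (t ^ 2)⁻¹ • f t⁻¹ := by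
  rw [← image_inv_eq_inv, integral_image_eq_integral_abs_deriv_smul hA
    (fun t ht => (hasDerivAt_inv (ne_of_mem_of_not_mem ht hA0)).hasDerivWithinAt)
    inv_injective.injOn]
  simp

theorem integrableOn_Iic_const_sub_rpow {a b c : ℝ} (ha : a < -1) (hbc : b < c) :
    IntegrableOn (fun y : ℝ => (c - y) ^ a) (Iic b) := by
  have reflect := (Measure.measurePreserving_sub_left volume c).integrableOn_comp_preimage
    (MeasurableEquiv.subLeft c).measurableEmbedding (f := fun z : ℝ => z ^ a) (s := Ici (c - b))
  simp only [preimage_const_sub_Ici, sub_sub_cancel, Function.comp_def] at reflect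
  rw [reflect, integrableOn_Ici_iff_integrableOn_Ioi]
  exact integrableOn_Ioi_rpow_of_lt ha (sub_pos.2 hbc)

theorem integral_Iic_const_sub_rpow {a b c : ℝ} (ha : a < -1) (hbc : b < c) :
    ∫ y in Iic b, (c - y) ^ a = -(c - b) ^ (a + 1) / (a + 1) := by
  have reflect := (Measure.measurePreserving_sub_left volume c).setIntegral_preimage_emb
    (MeasurableEquiv.subLeft c).measurableEmbedding (fun z : ℝ => z ^ a) (Ici (c - b))
  simp only [preimage_const_sub_Ici, sub_sub_cancel] at reflect
  rw [reflect, integral_Ici_eq_integral_Ioi, integral_Ioi_rpow_of_lt ha (sub_pos.2 hbc)]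

end ChangeOfVariables

theorem setOf_lt_norm_sub_eq_union (c ε : ℝ) :
    {y : ℝ | ε < ‖y - c‖} = Iio (c - ε) ∪ Ioi (c + ε) := by
  ext y
  simp only [mem_ofPred_eq, Real.norm_eq_abs, lt_abs, mem_union, mem_Iio, mem_Ioi]
  constructor
  · rintro (h | h)
    · exact Or.inr (by linarith)
    · exact Or.inl (by linarith)
  · rintro (h | h)
    · exact Or.inr (by linarith)
    · exact Or.inl (by linarith)

theorem one_sub_rpow_nonneg {s t : ℝ} (hs : 0 ≤ s) (ht : t ∈ Icc 0 1) : 0 ≤ 1 - t ^ s :=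
  sub_nonneg.2 (Real.rpow_le_one ht.1 ht.2 hs)

theorem one_sub_rpow_le_one_sub {s t : ℝ} (hs : s ≤ 1) (ht : t ∈ Ioc 0 1) :
    1 - t ^ s ≤ 1 - t :=
  sub_le_sub_left (by simpa using Real.rpow_le_rpow_of_exponent_ge ht.1 ht.2 hs) 1

theorem tendsto_rpow_nhdsGT_zero {p : ℝ} (hp : 0 < p) :
    Tendsto (fun ε : ℝ => ε ^ p) (𝓝[>] 0) (𝓝 0) :=
  ((Real.continuous_rpow_const hp.le).tendsto' 0 0 (Real.zero_rpow hp.ne')).mono_left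
    nhdsWithin_le_nhds

/-- The function `x ↦ (x₊)^s` on the real line. -/
noncomputable def posPartRpow (s x : ℝ) : ℝ := max x 0 ^ s

section PosPartRpow

variable {s : ℝ}

theorem posPartRpow_of_nonneg {x : ℝ} (hx : 0 ≤ x) : posPartRpow s x = x ^ s := by
  rw [posPartRpow, max_eq_left hx]

theorem posPartRpow_of_nonpos (hs : s ≠ 0) {x : ℝ} (hx : x ≤ 0) : posPartRpow s x = 0 := by
  rw [posPartRpow, max_eq_right hx, Real.zero_rpow hs]

theorem posPartRpow_nonneg (s x : ℝ) : 0 ≤ posPartRpow s x :=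
  Real.rpow_nonneg (le_max_right _ _) _

theorem continuous_posPartRpow (hs : 0 ≤ s) : Continuous (posPartRpow s) :=
  (continuous_id.max continuous_const).rpow_const fun _ => Or.inr hs

theorem posPartRpow_smul {r : ℝ} (hr : 0 ≤ r) (z : ℝ) :
    posPartRpow s (r • z) = r ^ s * posPartRpow s z := by
  have max_smul : max (r • z) 0 = r * max z 0 := by
    rw [mul_max_of_nonneg _ _ hr, mul_zero, smul_eq_mul]
  rw [posPartRpow, posPartRpow, max_smul, Real.mul_rpow hr (le_max_right _ _)]

namespace posPartRpow

theorem fracDiffQuotient_eq (s x y : ℝ) :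
    fracDiffQuotient s (posPartRpow s) x y =
      (max x 0 ^ s - max y 0 ^ s) / |x - y| ^ (1 + 2 * s) := by
  simp only [fracDiffQuotient, posPartRpow, Module.finrank_self, Nat.cast_one, Real.norm_eq_abs]

section NegativePoint

theorem fracDiffQuotient_neg_one (hs : s ≠ 0) (y : ℝ) :
    fracDiffQuotient s (posPartRpow s) (-1) y =
      -(posPartRpow s y / |1 + y| ^ (1 + 2 * s)) := by
  rw [fracDiffQuotient, posPartRpow_of_nonpos hs (by norm_num), zero_sub, neg_div,
    Module.finrank_self, Nat.cast_one, Real.norm_eq_abs, ← abs_neg, neg_sub, sub_neg_eq_add,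
    add_comm y]

theorem abs_fracDiffQuotient_neg_one_le (hs : 0 < s) (y : ℝ) :
    |fracDiffQuotient s (posPartRpow s) (-1) y| ≤ (1 + |y|) ^ (-(1 + s)) := by
  rw [fracDiffQuotient_neg_one hs.ne', abs_neg,
    abs_of_nonneg (div_nonneg (posPartRpow_nonneg s y) (by positivity))]
  rcases le_total y 0 with hy | hy
  · rw [posPartRpow_of_nonpos hs.ne' hy, zero_div]
    positivity
  · rw [posPartRpow_of_nonneg hy, abs_of_nonneg hy, abs_of_pos (by positivity : 0 < 1 + y)]
    calc y ^ s / (1 + y) ^ (1 + 2 * s)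
        ≤ (1 + y) ^ s / (1 + y) ^ (1 + 2 * s) := by gcongr; linarith
      _ = (1 + y) ^ (-(1 + s)) := by
        rw [← Real.rpow_sub (by positivity)]
        congr 1
        ring

theorem integrable_fracDiffQuotient_neg_one (hs : 0 < s) :
    Integrable (fracDiffQuotient s (posPartRpow s) (-1)) :=
  (integrable_one_add_norm (r := 1 + s) (by simpa using hs)).mono'
    (measurable_fracDiffQuotient (continuous_posPartRpow hs.le).measurable s
      (-1)).aestronglyMeasurable
    (ae_of_all _ (abs_fracDiffQuotient_neg_one_le hs))

theorem integral_fracDiffQuotient_neg_one_neg (hs : 0 < s) :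
    ∫ y, fracDiffQuotient s (posPartRpow s) (-1) y < 0 := by
  rw [← neg_pos, ← integral_neg]
  simp only [fracDiffQuotient_neg_one hs.ne', neg_neg]
  have integrable := (integrable_fracDiffQuotient_neg_one hs).neg
  simp only [Pi.neg_def, fracDiffQuotient_neg_one hs.ne', neg_neg] at integrable
  rw [integral_pos_iff_support_of_nonneg
    (fun y => div_nonneg (posPartRpow_nonneg s y) (by positivity)) integrable]
  have Ioi_subset_support :
      Ioi 0 ⊆ Function.support fun y => posPartRpow s y / |1 + y| ^ (1 + 2 * s) := by
    intro y (hy : 0 < y)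
    rw [Function.mem_support, posPartRpow_of_nonneg hy.le]
    positivity
  exact (by simp : 0 < volume (Ioi (0 : ℝ))).trans_le (measure_mono Ioi_subset_support)

end NegativePoint

section PositivePoint

theorem fracDiffQuotient_one_of_nonpos (hs : s ≠ 0) {y : ℝ} (hy : y ≤ 0) :
    fracDiffQuotient s (posPartRpow s) 1 y = (1 - y) ^ (-(1 + 2 * s)) := by
  have sub_pos : 0 < 1 - y := by linarith
  rw [fracDiffQuotient_eq, max_eq_left zero_le_one, Real.one_rpow, max_eq_right hy,
    Real.zero_rpow hs, sub_zero, abs_of_pos sub_pos, Real.rpow_neg sub_pos.le, one_div]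

theorem fracDiffQuotient_one_of_mem_Ico {t : ℝ} (ht : t ∈ Ico 0 1) :
    fracDiffQuotient s (posPartRpow s) 1 t = (1 - t ^ s) / (1 - t) ^ (1 + 2 * s) := by
  rw [fracDiffQuotient_eq, max_eq_left zero_le_one, Real.one_rpow, max_eq_left ht.1,
    abs_of_pos (sub_pos.2 ht.2)]

theorem fracDiffQuotient_one_inv {t : ℝ} (ht : 0 < t) :
    (t ^ 2)⁻¹ * fracDiffQuotient s (posPartRpow s) 1 t⁻¹ =
      -(t ^ (s - 1) * fracDiffQuotient s (posPartRpow s) 1 t) := by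
  have homogeneous := fracDiffQuotient_smul_smul (s := s) (inv_pos.2 ht)
    (posPartRpow_smul (s := s) (inv_pos.2 ht).le) t 1
  rw [smul_eq_mul, smul_eq_mul, inv_mul_cancel₀ ht.ne', mul_one, Module.finrank_self,
    Nat.cast_one] at homogeneous
  rw [homogeneous, fracDiffQuotient_swap s _ t 1, mul_neg, mul_neg, ← mul_assoc, ← Real.rpow_two,
    Real.inv_rpow ht.le, ← Real.rpow_neg ht.le, ← Real.rpow_neg ht.le, ← Real.rpow_add ht]
  congr 3
  ring

theorem continuousOn_fracDiffQuotient_one (hs : 0 ≤ s) :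
    ContinuousOn (fracDiffQuotient s (posPartRpow s) 1) (Iio 1) :=
  (continuousOn_fracDiffQuotient (continuous_posPartRpow hs) s 1).mono fun _ ht => ne_of_lt ht

theorem intervalIntegrable_fracDiffQuotient_one (hs : 0 ≤ s) {a b : ℝ} (ha : a < 1)
    (hb : b < 1) :
    IntervalIntegrable (fracDiffQuotient s (posPartRpow s) 1) volume a b :=
  ((continuousOn_fracDiffQuotient_one hs).mono fun _ ht =>
    ht.2.trans_lt (max_lt ha hb)).intervalIntegrable

theorem intervalIntegrable_rpow_mul_fracDiffQuotient_one (hs : 0 < s) {a b : ℝ}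
    (ha : a < 1) (hb : b < 1) :
    IntervalIntegrable (fun t => t ^ (s - 1) * fracDiffQuotient s (posPartRpow s) 1 t)
      volume a b :=
  (intervalIntegral.intervalIntegrable_rpow' (by linarith)).mul_continuousOn
    ((continuousOn_fracDiffQuotient_one hs.le).mono fun _ ht =>
      ht.2.trans_lt (max_lt ha hb))

theorem integrableOn_Iic_fracDiffQuotient_one (hs : 0 < s) {a : ℝ} (ha0 : 0 ≤ a)
    (ha1 : a < 1) :
    IntegrableOn (fracDiffQuotient s (posPartRpow s) 1) (Iic a) := by
  rw [← Iic_union_Ioc_eq_Iic ha0]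
  refine IntegrableOn.union ?_ ?_
  · exact (integrableOn_Iic_const_sub_rpow (by linarith) one_pos).congr_fun
      (fun y hy => (fracDiffQuotient_one_of_nonpos hs.ne' hy).symm) measurableSet_Iic
  · exact (intervalIntegrable_iff_integrableOn_Ioc_of_le ha0).1
      (intervalIntegrable_fracDiffQuotient_one hs.le one_pos ha1)

theorem setIntegral_Iic_fracDiffQuotient_one (hs : 0 < s) {a : ℝ} (ha0 : 0 ≤ a)
    (ha1 : a < 1) :
    ∫ y in Iic a, fracDiffQuotient s (posPartRpow s) 1 y =
      1 / (2 * s) + ∫ t in 0..a, fracDiffQuotient s (posPartRpow s) 1 t := by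
  rw [← intervalIntegral.integral_Iic_sub_Iic
    (integrableOn_Iic_fracDiffQuotient_one hs le_rfl one_pos)
    (integrableOn_Iic_fracDiffQuotient_one hs ha0 ha1)]
  have nonpos_part : ∫ y in Iic 0, fracDiffQuotient s (posPartRpow s) 1 y = 1 / (2 * s) := by
    rw [setIntegral_congr_fun measurableSet_Iic
        fun y hy => fracDiffQuotient_one_of_nonpos hs.ne' hy,
      integral_Iic_const_sub_rpow (by linarith) one_pos, sub_zero, Real.one_rpow,
      ← neg_div_neg_eq, neg_neg]
    congr 1
    ring
  rw [nonpos_part, add_sub_cancel]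

theorem eqOn_fracDiffQuotient_one_inv (s b : ℝ) :
    EqOn (fun t => (t ^ 2)⁻¹ • fracDiffQuotient s (posPartRpow s) 1 t⁻¹)
      (fun t => -(t ^ (s - 1) * fracDiffQuotient s (posPartRpow s) 1 t)) (Ioo 0 b) :=
  fun _ ht => fracDiffQuotient_one_inv ht.1

theorem integrableOn_Ioi_inv_fracDiffQuotient_one (hs : 0 < s) {b : ℝ} (hb0 : 0 < b)
    (hb1 : b < 1) :
    IntegrableOn (fracDiffQuotient s (posPartRpow s) 1) (Ioi b⁻¹) := by
  rw [← inv_Ioo_0_left hb0, integrableOn_inv_iff measurableSet_Ioo left_notMem_Ioo,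
    integrableOn_congr_fun (eqOn_fracDiffQuotient_one_inv s b) measurableSet_Ioo]
  exact ((intervalIntegrable_iff_integrableOn_Ioo_of_le hb0.le).1
    (intervalIntegrable_rpow_mul_fracDiffQuotient_one hs one_pos hb1)).neg

theorem setIntegral_Ioi_inv_fracDiffQuotient_one {b : ℝ} (hb : 0 < b) :
    ∫ y in Ioi b⁻¹, fracDiffQuotient s (posPartRpow s) 1 y =
      -∫ t in 0..b, t ^ (s - 1) * fracDiffQuotient s (posPartRpow s) 1 t := by
  rw [← inv_Ioo_0_left hb, setIntegral_inv measurableSet_Ioo left_notMem_Ioo,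
    setIntegral_congr_fun measurableSet_Ioo (eqOn_fracDiffQuotient_one_inv s b), integral_neg,
    intervalIntegral.integral_of_le hb.le, integral_Ioc_eq_integral_Ioo]

/-- The primitive on `(0, 1)` of `(1 - t^{s-1}) q(t)`, where `q` is the `fracDiffQuotient` of
`(x₊)^s` at `1`. -/
noncomputable def inversionPrimitive (s t : ℝ) : ℝ :=
  (1 - t ^ s) ^ 2 * (1 - t) ^ (-(2 * s)) / (2 * s)

theorem inversionPrimitive_zero (hs : s ≠ 0) : inversionPrimitive s 0 = 1 / (2 * s) := by
  simp [inversionPrimitive, Real.zero_rpow hs]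

theorem continuousOn_inversionPrimitive (hs : 0 ≤ s) :
    ContinuousOn (inversionPrimitive s) (Iio 1) := by
  have rpow_left : ContinuousOn (fun t : ℝ => t ^ s) (Iio 1) :=
    (Real.continuous_rpow_const hs).continuousOn
  have rpow_right : ContinuousOn (fun t : ℝ => (1 - t) ^ (-(2 * s))) (Iio 1) :=
    (continuousOn_const.sub continuousOn_id).rpow_const fun _ ht => Or.inl (sub_pos.2 ht).ne'
  exact (((continuousOn_const.sub rpow_left).pow 2).mul rpow_right).div_const _

theorem hasDerivAt_inversionPrimitive (hs : s ≠ 0) {t : ℝ} (ht : t ∈ Ioo 0 1) :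
    HasDerivAt (inversionPrimitive s)
      (fracDiffQuotient s (posPartRpow s) 1 t -
        t ^ (s - 1) * fracDiffQuotient s (posPartRpow s) 1 t) t := by
  have one_sub_pos : 0 < 1 - t := sub_pos.2 ht.2
  have deriv_left : HasDerivAt (fun t : ℝ => t ^ s) (s * t ^ (s - 1)) t :=
    Real.hasDerivAt_rpow_const (Or.inl ht.1.ne')
  have deriv_right : HasDerivAt (fun t : ℝ => (1 - t) ^ (-(2 * s)))
      (-1 * -(2 * s) * (1 - t) ^ (-(2 * s) - 1)) t :=
    ((hasDerivAt_id t).const_sub 1).rpow_const (Or.inl one_sub_pos.ne')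
  refine ((((deriv_left.const_sub 1).pow 2).mul deriv_right).div_const (2 * s)).congr_deriv ?_
  have rpow_neg_sub_one : (1 - t) ^ (-(2 * s) - 1) = ((1 - t) ^ (1 + 2 * s))⁻¹ := by
    rw [← Real.rpow_neg one_sub_pos.le, neg_add']
    ring_nf
  have rpow_neg : (1 - t) ^ (-(2 * s)) = (1 - t) * ((1 - t) ^ (1 + 2 * s))⁻¹ := by
    rw [Real.rpow_add one_sub_pos, Real.rpow_one, mul_inv, mul_inv_cancel_left₀ one_sub_pos.ne',
      Real.rpow_neg one_sub_pos.le]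
  have rpow_eq : t ^ s = t * t ^ (s - 1) := by
    rw [Real.rpow_sub_one ht.1.ne', mul_div_cancel₀ _ ht.1.ne']
  rw [fracDiffQuotient_one_of_mem_Ico ⟨ht.1.le, ht.2⟩, Pi.pow_apply,
    rpow_neg_sub_one, rpow_neg, rpow_eq]
  field_simp
  ring

theorem integral_fracDiffQuotient_one_sub (hs : 0 < s) {a : ℝ} (ha0 : 0 ≤ a)
    (ha1 : a < 1) :
    (∫ t in 0..a, fracDiffQuotient s (posPartRpow s) 1 t) -
        ∫ t in 0..a, t ^ (s - 1) * fracDiffQuotient s (posPartRpow s) 1 t =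
      inversionPrimitive s a - 1 / (2 * s) := by
  have integrable := intervalIntegrable_fracDiffQuotient_one hs.le one_pos ha1
  have integrable_rpow_mul :=
    intervalIntegrable_rpow_mul_fracDiffQuotient_one hs one_pos ha1
  rw [← intervalIntegral.integral_sub integrable integrable_rpow_mul,
    intervalIntegral.integral_eq_sub_of_hasDerivAt_of_le ha0
      ((continuousOn_inversionPrimitive hs.le).mono fun _ ht => ht.2.trans_lt ha1)
      (fun t ht => hasDerivAt_inversionPrimitive hs.ne' ⟨ht.1, ht.2.trans ha1⟩)
      (integrable.sub integrable_rpow_mul),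
    inversionPrimitive_zero hs.ne']

theorem setIntegral_truncated_fracDiffQuotient_one (hs : 0 < s) {ε : ℝ} (hε0 : 0 < ε)
    (hε1 : ε ≤ 1) :
    ∫ y in {y : ℝ | ε < ‖y - 1‖}, fracDiffQuotient s (posPartRpow s) 1 y =
      inversionPrimitive s (1 - ε) -
        ∫ t in (1 - ε)..(1 + ε)⁻¹, t ^ (s - 1) * fracDiffQuotient s (posPartRpow s) 1 t := by
  have sub_nonneg : 0 ≤ 1 - ε := by linarith
  have sub_lt_one : 1 - ε < 1 := by linarith
  have inv_add_pos : 0 < (1 + ε)⁻¹ := by positivity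
  have inv_add_lt_one : (1 + ε)⁻¹ < 1 := inv_lt_one_of_one_lt₀ (by linarith)
  have integrable_left := integrableOn_Iic_fracDiffQuotient_one hs sub_nonneg sub_lt_one
  have integrable_right :=
    integrableOn_Ioi_inv_fracDiffQuotient_one hs inv_add_pos inv_add_lt_one
  have right := setIntegral_Ioi_inv_fracDiffQuotient_one (s := s) inv_add_pos
  rw [inv_inv] at integrable_right right
  have disjoint : Disjoint (Iio (1 - ε)) (Ioi (1 + ε)) :=
    (Iio_disjoint_Ici (by linarith)).mono_right Ioi_subset_Ici_self
  rw [setOf_lt_norm_sub_eq_union, setIntegral_union disjoint measurableSet_Ioi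
      (integrable_left.mono_set Iio_subset_Iic_self) integrable_right,
    ← integral_Iic_eq_integral_Iio,
    setIntegral_Iic_fracDiffQuotient_one hs sub_nonneg sub_lt_one, right,
    ← intervalIntegral.integral_add_adjacent_intervals
      (intervalIntegrable_rpow_mul_fracDiffQuotient_one hs one_pos sub_lt_one)
      (intervalIntegrable_rpow_mul_fracDiffQuotient_one hs sub_lt_one inv_add_lt_one)]
  linarith [integral_fracDiffQuotient_one_sub hs sub_nonneg sub_lt_one]

theorem tendsto_inversionPrimitive_one_sub (hs0 : 0 < s) (hs1 : s < 1) :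
    Tendsto (fun ε => inversionPrimitive s (1 - ε)) (𝓝[>] 0) (𝓝 0) := by
  have majorant : Tendsto (fun ε : ℝ => ε ^ (2 - 2 * s) / (2 * s)) (𝓝[>] 0) (𝓝 0) := by
    simpa using (tendsto_rpow_nhdsGT_zero (by linarith : 0 < 2 - 2 * s)).div_const (2 * s)
  refine squeeze_zero' ?_ ?_ majorant <;>
    filter_upwards [Ioo_mem_nhdsGT one_pos] with ε ⟨hε0, hε1⟩ <;>
    rw [inversionPrimitive, sub_sub_cancel]
  · positivity
  · have nonneg := one_sub_rpow_nonneg hs0.le (t := 1 - ε) ⟨by linarith, by linarith⟩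
    have le := one_sub_rpow_le_one_sub hs1.le (t := 1 - ε) ⟨by linarith, by linarith⟩
    rw [sub_sub_cancel] at le
    rw [sub_eq_add_neg 2, Real.rpow_add hε0, Real.rpow_two]
    gcongr

theorem abs_rpow_mul_fracDiffQuotient_one_le (hs0 : 0 ≤ s) (hs1 : s ≤ 1) {t : ℝ}
    (ht : t ∈ Ioo 0 1) :
    |t ^ (s - 1) * fracDiffQuotient s (posPartRpow s) 1 t| ≤ t⁻¹ * (1 - t) ^ (-(2 * s)) := by
  obtain ⟨ht0, ht1⟩ := ht
  have one_sub_pos : 0 < 1 - t := sub_pos.2 ht1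
  have nonneg := one_sub_rpow_nonneg hs0 ⟨ht0.le, ht1.le⟩
  rw [fracDiffQuotient_one_of_mem_Ico ⟨ht0.le, ht1⟩, abs_of_nonneg (by positivity)]
  have rpow_le_inv : t ^ (s - 1) ≤ t⁻¹ := by
    rw [← Real.rpow_neg_one]
    exact Real.rpow_le_rpow_of_exponent_ge ht0 ht1.le (by linarith)
  have quotient_le : (1 - t ^ s) / (1 - t) ^ (1 + 2 * s) ≤ (1 - t) ^ (-(2 * s)) :=
    calc (1 - t ^ s) / (1 - t) ^ (1 + 2 * s)
        ≤ (1 - t) / (1 - t) ^ (1 + 2 * s) := by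
          gcongr ?_ / _
          exact one_sub_rpow_le_one_sub hs1 ⟨ht0, ht1.le⟩
      _ = (1 - t) ^ (-(2 * s)) := by
          rw [Real.rpow_add one_sub_pos, Real.rpow_one, Real.rpow_neg one_sub_pos.le,
            div_mul_cancel_left₀ one_sub_pos.ne']
  gcongr

theorem norm_integral_rpow_mul_fracDiffQuotient_one_le (hs0 : 0 ≤ s) (hs1 : s ≤ 1)
    {ε : ℝ} (hε0 : 0 < ε) (hε1 : ε ≤ 1 / 2) :
    ‖∫ t in (1 - ε)..(1 + ε)⁻¹, t ^ (s - 1) * fracDiffQuotient s (posPartRpow s) 1 t‖ ≤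
      8 * (ε / 2) ^ (2 - 2 * s) := by
  have gap_eq : (1 + ε)⁻¹ - (1 - ε) = ε ^ 2 / (1 + ε) := by field_simp; ring
  have gap_nonneg : 0 ≤ (1 + ε)⁻¹ - (1 - ε) := by rw [gap_eq]; positivity
  have gap_le : (1 + ε)⁻¹ - (1 - ε) ≤ ε ^ 2 := by
    rw [gap_eq]
    exact div_le_self (by positivity) (by linarith)
  have integrand_le : ∀ t ∈ uIoc (1 - ε) (1 + ε)⁻¹,
      ‖t ^ (s - 1) * fracDiffQuotient s (posPartRpow s) 1 t‖ ≤ 2 * (ε / 2) ^ (-(2 * s)) := by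
    intro t ht
    rw [uIoc_of_le (by linarith)] at ht
    have half_le : 2⁻¹ ≤ t := by linarith [ht.1]
    have le_one_sub : ε / 2 ≤ 1 - t := by nlinarith [ht.2]
    refine (abs_rpow_mul_fracDiffQuotient_one_le hs0 hs1
      ⟨by linarith, by linarith⟩).trans ?_
    have inv_le_two : t⁻¹ ≤ 2 := inv_le_of_inv_le₀ two_pos half_le
    have rpow_le : (1 - t) ^ (-(2 * s)) ≤ (ε / 2) ^ (-(2 * s)) :=
      Real.rpow_le_rpow_of_nonpos (by positivity) le_one_sub (by linarith)
    exact mul_le_mul inv_le_two rpow_le (Real.rpow_nonneg (by linarith) _) two_pos.le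
  calc _ ≤ 2 * (ε / 2) ^ (-(2 * s)) * |(1 + ε)⁻¹ - (1 - ε)| :=
        intervalIntegral.norm_integral_le_of_norm_le_const integrand_le
    _ ≤ 2 * (ε / 2) ^ (-(2 * s)) * ε ^ 2 := by
        rw [abs_of_nonneg gap_nonneg]
        gcongr
    _ = 8 * (ε / 2) ^ (2 - 2 * s) := by
        rw [sub_eq_add_neg 2, Real.rpow_add (by positivity), Real.rpow_two]
        ring

theorem tendsto_integral_rpow_mul_fracDiffQuotient_one (hs0 : 0 ≤ s) (hs1 : s < 1) :
    Tendsto (fun ε : ℝ => ∫ t in (1 - ε)..(1 + ε)⁻¹,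
      t ^ (s - 1) * fracDiffQuotient s (posPartRpow s) 1 t) (𝓝[>] 0) (𝓝 0) := by
  have exponent_pos : 0 < 2 - 2 * s := by linarith
  have majorant : Tendsto (fun ε : ℝ => 8 * (ε / 2) ^ (2 - 2 * s)) (𝓝[>] 0) (𝓝 0) :=
    (Continuous.tendsto' (by fun_prop (disch := linarith)) 0 0
      (by simp [Real.zero_rpow exponent_pos.ne'])).mono_left nhdsWithin_le_nhds
  refine squeeze_zero_norm' ?_ majorant
  filter_upwards [Ioo_mem_nhdsGT one_half_pos] with ε hε
  exact norm_integral_rpow_mul_fracDiffQuotient_one_le hs0 hs1.le hε.1 hε.2.le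

theorem isFracHarmonicAt_one (hs0 : 0 < s) (hs1 : s < 1) :
    IsFracHarmonicAt s (posPartRpow s) 1 := by
  have limit := (tendsto_inversionPrimitive_one_sub hs0 hs1).sub
    (tendsto_integral_rpow_mul_fracDiffQuotient_one hs0.le hs1)
  rw [sub_zero] at limit
  refine limit.congr' ?_
  filter_upwards [Ioo_mem_nhdsGT one_pos] with ε hε
  exact (setIntegral_truncated_fracDiffQuotient_one hs0 hε.1 hε.2.le).symm

end PositivePoint

end posPartRpow

end PosPartRpow

/-- For `s ∈ (0,1)` and `u(x) = (x₊)^s` on `ℝ`: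
(i) `u` is `s`-harmonic at every `x > 0` (the principal value limit exists and
equals `0`), and (ii) there is `C > 0`, depending only on `s`, such that for
every `x < 0` the defining integral converges absolutely and equals `−C|x|^{−s}`. -/
theorem xPlusPowS_sHarmonic (s : ℝ) (hs : s ∈ Set.Ioo (0:ℝ) 1) :
    (∀ x : ℝ, 0 < x →
      Filter.Tendsto
        (fun ε : ℝ => ∫ y in {y : ℝ | ε < |y - x|},
          ((max x 0) ^ s - (max y 0) ^ s) / |x - y| ^ (1 + 2 * s))
        (𝓝[>] (0:ℝ)) (𝓝 0)) ∧
    ∃ C : ℝ, 0 < C ∧ ∀ x : ℝ, x < 0 →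
      MeasureTheory.Integrable
        (fun y : ℝ => ((max x 0) ^ s - (max y 0) ^ s) / |x - y| ^ (1 + 2 * s)) ∧
      (∫ y : ℝ, ((max x 0) ^ s - (max y 0) ^ s) / |x - y| ^ (1 + 2 * s))
        = -C * |x| ^ (-s) := by
  obtain ⟨hs0, hs1⟩ := hs
  simp only [← posPartRpow.fracDiffQuotient_eq]
  simp only [← Real.norm_eq_abs]
  refine ⟨fun x hx => ?_, -∫ y, fracDiffQuotient s (posPartRpow s) (-1) y,
    neg_pos.2 (posPartRpow.integral_fracDiffQuotient_neg_one_neg hs0), fun x hx => ?_⟩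
  · have harmonic := (posPartRpow.isFracHarmonicAt_one hs0 hs1).smul hx (posPartRpow_smul hx.le)
    rwa [smul_eq_mul, mul_one] at harmonic
  · have norm_pos : 0 < ‖x‖ := norm_pos_iff.2 hx.ne
    have eq_smul : x = ‖x‖ • (-1) := by rw [Real.norm_of_nonpos hx.le]; simp
    have homogeneous := posPartRpow_smul (s := s) norm_pos.le
    have integrable := integrable_fracDiffQuotient_smul norm_pos homogeneous
      (posPartRpow.integrable_fracDiffQuotient_neg_one hs0)
    have integral_eq := integral_fracDiffQuotient_smul (μ := volume) (s := s) norm_pos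
      homogeneous (-1)
    rw [← eq_smul] at integrable integral_eq
    refine ⟨integrable, ?_⟩
    rw [integral_eq, neg_neg, mul_comm, show s - 2 * s = -s by ring]
end

section
/- Let n ≥ 1, s ∈ (0,1), and set a_{n,s} := (∫_{{z ∈ ℝⁿ : |z| > 1}} (|z|² − 1)^{−s} |z|^{−n} dz)^{-1}. For r > 0 define the s-mean kernel A_r(y) := a_{n,s} · r^{2s} / ((|y|² − r²)^s |y|^n) for |y| > r and A_r(y) := 0 for |y| ≤ r (so that ∫_{{|y| > r}} A_r(y) dy = 1 for every r > 0). Let u ∈ L¹_s(ℝⁿ), let x ∈ ℝⁿ, and assume there exist δ > 0 and ε₀ > 0 such that either 2s + ε₀ ≤ 1 and u is Hölder continuous of exponent 2s + ε₀ on B_δ(x), or 1 < 2s + ε₀ ≤ 2 and u is C¹ on B_δ(x) with gradient Hölder continuous of exponent 2s + ε₀ − 1 there. If u(x) = ∫_{{y : |y| > r}} A_r(y) u(x − y) dy for every sufficiently small r > 0, then u is s-harmonic at x, i.e., lim_{r→0⁺} ∫_{{y : |y| > r}} (u(x) − u(x−y))/|y|^{n+2s} dy exists and equals 0. -/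
open MeasureTheory Filter Metric Set
open scoped Topology

/-!
Up to the factor `a_{n,s} r^{2s}`, the mean value kernel `A_r` is
`K_r(y) = 1_{|y| > r} (|y|² - r²)^{-s} |y|^{-n}`, which tends to `|y|^{-(n + 2s)}` as `r → 0`. Both
kernels are even, so the mean value identity says that `K_r` integrates the second difference
`g(y) = 2u(x) - u(x - y) - u(x + y)` to zero, and the principal value is half the limit of
`∫_{|y| > r} g(y) |y|^{-(n + 2s)} dy`. Since `g(y) = O(|y|^{2s + ε})`, the last integral converges
absolutely. Its full value is `0`: for `|y| > 2r` dominated convergence applies because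
`K_r(y) ≤ 4^s |y|^{-(n + 2s)}`, while the annulus `r < |y| ≤ 2r` contributes `O(r^ε)` because `K_r`
has total mass proportional to `r^{-2s}`.
-/

open Asymptotics
open Module (finrank)

section LinearApproximation

variable {E F : Type*} [NormedAddCommGroup E] [NormedAddCommGroup F]
  {u : E → F} {x : E} {α δ : ℝ}

theorem isBigO_sub_of_holder_ball (hδ : 0 < δ) {C : ℝ}
    (hu : ∀ y ∈ ball x δ, ∀ z ∈ ball x δ, ‖u y - u z‖ ≤ C * ‖y - z‖ ^ α) :
    (fun y => u y - u x) =O[𝓝 x] fun y => ‖y - x‖ ^ α := by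
  refine .of_bound C ?_
  filter_upwards [ball_mem_nhds x hδ] with y hy
  rw [Real.norm_of_nonneg (by positivity)]
  exact hu y hy x (mem_ball_self hδ)

theorem isBigO_norm_rpow_one (hα : 0 ≤ α) :
    (fun y : E => ‖y‖ ^ α) =O[𝓝 0] fun _ => (1 : ℝ) :=
  ((continuous_norm.rpow_const fun _ => .inr hα).tendsto 0).isBigO_one ℝ

variable [NormedSpace ℝ E] [NormedSpace ℝ F]

theorem isBigO_sub_sub_fderiv (hα : 0 ≤ α) (hd : ∀ᶠ y in 𝓝 x, DifferentiableAt ℝ u y)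
    (hu : (fun y => fderiv ℝ u y - fderiv ℝ u x) =O[𝓝 x] fun y => ‖y - x‖ ^ α) :
    (fun y => u y - u x - fderiv ℝ u x (y - x)) =O[𝓝 x] fun y => ‖y - x‖ ^ (α + 1) := by
  obtain ⟨C, hC, hbound⟩ := hu.exists_nonneg
  obtain ⟨δ, hδ, hball⟩ := eventually_nhds_iff_ball.1 (hd.and hbound.bound)
  refine .of_bound C ?_
  filter_upwards [ball_mem_nhds x hδ] with y hy
  have hsub : closedBall x ‖y - x‖ ⊆ ball x δ :=
    closedBall_subset_ball (by rwa [← dist_eq_norm])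
  have hderiv : ∀ z ∈ closedBall x ‖y - x‖,
      ‖fderiv ℝ u z - fderiv ℝ u x‖ ≤ C * ‖y - x‖ ^ α := fun z hz => by
    refine (hball z (hsub hz)).2.trans ?_
    rw [Real.norm_of_nonneg (by positivity)]
    rw [mem_closedBall, dist_eq_norm] at hz
    gcongr
  calc ‖u y - u x - fderiv ℝ u x (y - x)‖
      ≤ C * ‖y - x‖ ^ α * ‖y - x‖ :=
        (convex_closedBall x ‖y - x‖).norm_image_sub_le_of_norm_fderiv_le'
          (fun z hz => (hball z (hsub hz)).1) hderiv (mem_closedBall_self (norm_nonneg _))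
          (by rw [mem_closedBall, dist_eq_norm])
    _ = C * ‖‖y - x‖ ^ (α + 1)‖ := by
        rw [mul_assoc, ← Real.rpow_add_one' (norm_nonneg _) (by positivity),
          Real.norm_of_nonneg (by positivity)]

theorem exists_isBigO_taylor_of_holder_ball (hδ : 0 < δ)
    (hu : (∃ C : ℝ, ∀ y ∈ ball x δ, ∀ z ∈ ball x δ, ‖u y - u z‖ ≤ C * ‖y - z‖ ^ α) ∨
      (1 ≤ α ∧ (∀ y ∈ ball x δ, DifferentiableAt ℝ u y) ∧
        ∃ C : ℝ, ∀ y ∈ ball x δ, ∀ z ∈ ball x δ,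
          ‖fderiv ℝ u y - fderiv ℝ u z‖ ≤ C * ‖y - z‖ ^ (α - 1))) :
    ∃ L : E →L[ℝ] F, (fun y => u y - u x - L (y - x)) =O[𝓝 x] fun y => ‖y - x‖ ^ α := by
  rcases hu with ⟨C, hC⟩ | ⟨hα, hd, C, hC⟩
  · exact ⟨0, by simpa using isBigO_sub_of_holder_ball hδ hC⟩
  · exact ⟨fderiv ℝ u x, by
      simpa using isBigO_sub_sub_fderiv (sub_nonneg.2 hα)
        (eventually_of_mem (ball_mem_nhds x hδ) hd) (isBigO_sub_of_holder_ball hδ hC)⟩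

theorem isBigO_sub_comp_sub_left {L : E →L[ℝ] F}
    (hL : (fun y => u y - u x - L (y - x)) =O[𝓝 x] fun y => ‖y - x‖ ^ α) :
    (fun y => u x - u (x - y) - L y) =O[𝓝 0] fun y => ‖y‖ ^ α := by
  have hlim : Tendsto (fun y => x - y) (𝓝 0) (𝓝 x) :=
    (continuous_const.sub continuous_id).tendsto' 0 x (sub_zero x)
  refine (hL.comp_tendsto hlim).neg_left.congr (fun y => ?_) fun y => ?_
  · simp only [Function.comp_apply, sub_sub_cancel_left, map_neg]
    abel
  · simp only [Function.comp_apply, sub_sub_cancel_left, norm_neg]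

theorem isBigO_add_comp_neg {L : E →L[ℝ] F}
    (hL : (fun y => u y - L y) =O[𝓝 0] fun y => ‖y‖ ^ α) :
    (fun y => u y + u (-y)) =O[𝓝 0] fun y => ‖y‖ ^ α := by
  have hneg := hL.comp_tendsto (continuous_neg.tendsto' (0 : E) 0 neg_zero)
  simp only [Function.comp_def, norm_neg] at hneg
  refine (hL.add hneg).congr_left fun y => ?_
  rw [map_neg]
  abel

theorem isBigO_one_of_isBigO_sub_clm (hα : 0 ≤ α) {L : E →L[ℝ] F}
    (hL : (fun y => u y - L y) =O[𝓝 0] fun y => ‖y‖ ^ α) : u =O[𝓝 0] fun _ => (1 : ℝ) := by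
  simpa only [sub_add_cancel] using
    (hL.trans (isBigO_norm_rpow_one hα)).add ((L.continuous.tendsto 0).isBigO_one ℝ)

end LinearApproximation

section Decay

variable {E F : Type*} [NormedAddCommGroup E] [MeasurableSpace E] [BorelSpace E]
  [NormedAddCommGroup F] [NormedSpace ℝ F] {μ : Measure E} {f : E → F} {p : ℝ}

theorem measurableSet_setOf_lt_norm (r : ℝ) :
    MeasurableSet {y : E | r < ‖y‖} :=
  measurableSet_lt measurable_const measurable_norm

theorem integrable_one_add_norm_rpow_smul (hp : 0 ≤ p) (hfm : AEStronglyMeasurable f μ)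
    (hf : Integrable (fun y => ‖f y‖ / (1 + ‖y‖ ^ p)) μ) :
    Integrable (fun y => (1 + ‖y‖) ^ (-p) • f y) μ := by
  have hweight : Measurable fun y : E => (1 + ‖y‖) ^ (-p) := by fun_prop
  refine (hf.const_mul 2).mono' (hweight.aestronglyMeasurable.smul hfm) (.of_forall fun y => ?_)
  have h_one : 1 ≤ (1 + ‖y‖) ^ p := Real.one_le_rpow (by linarith [norm_nonneg y]) hp
  have h_norm : ‖y‖ ^ p ≤ (1 + ‖y‖) ^ p := by gcongr; linarith
  rw [norm_smul, Real.norm_of_nonneg (by positivity), Real.rpow_neg (by positivity),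
    ← div_eq_inv_mul, ← mul_div_assoc, div_le_div_iff₀ (by positivity) (by positivity)]
  nlinarith [norm_nonneg (f y)]

variable [NormedSpace ℝ E] [FiniteDimensional ℝ E] [μ.IsAddHaarMeasure]

theorem integrableOn_norm_rpow_smul_comp_sub_left (hp : 0 ≤ p)
    (hf : Integrable (fun y => (1 + ‖y‖) ^ (-p) • f y) μ) (x : E) {ρ : ℝ} (hρ : 0 < ρ) :
    IntegrableOn (fun y => ‖y‖ ^ (-p) • f (x - y)) {y | ρ < ‖y‖} μ := by
  have hweight : Measurable fun y : E => ‖y‖ ^ (-p) * (1 + ‖x - y‖) ^ p := by fun_prop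
  have hweight_le : ∀ y ∈ {y : E | ρ < ‖y‖},
      ‖‖y‖ ^ (-p) * (1 + ‖x - y‖) ^ p‖ ≤ ((1 + ‖x‖) / ρ + 1) ^ p := fun y (hy : ρ < ‖y‖) => by
    have hy0 : 0 < ‖y‖ := hρ.trans hy
    have hshift : 1 + ‖x - y‖ ≤ ((1 + ‖x‖) / ρ + 1) * ‖y‖ := calc
      1 + ‖x - y‖ ≤ (1 + ‖x‖) / ρ * ρ + ‖y‖ := by
        rw [div_mul_cancel₀ _ hρ.ne']
        linarith [norm_sub_le x y]
      _ ≤ (1 + ‖x‖) / ρ * ‖y‖ + ‖y‖ := by gcongr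
      _ = ((1 + ‖x‖) / ρ + 1) * ‖y‖ := by ring
    rw [Real.norm_of_nonneg (by positivity), Real.rpow_neg hy0.le, inv_mul_le_iff₀ (by positivity),
      ← Real.mul_rpow hy0.le (by positivity), mul_comm ‖y‖]
    gcongr
  refine ((hf.comp_sub_left x).integrableOn.bdd_smul _ hweight.aestronglyMeasurable
    (ae_restrict_of_forall_mem (measurableSet_setOf_lt_norm ρ) hweight_le)).congr
    (.of_forall fun y => ?_)
  have hpos : 0 < 1 + ‖x - y‖ := by positivity
  simp only [Pi.smul_apply', smul_smul]
  rw [mul_assoc, ← Real.rpow_add hpos, add_neg_cancel, Real.rpow_zero, mul_one]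

end Decay

section Kernels

variable {E : Type*} [NormedAddCommGroup E] [NormedSpace ℝ E] {s r : ℝ} {y : E}

/-- The singular kernel `|y|^{-(d + 2s)}` of the fractional Laplacian of order `s`, where `d` is
the dimension of the space. -/
noncomputable def fracLaplacianKernel (s : ℝ) (y : E) : ℝ :=
  ‖y‖ ^ (-(finrank ℝ E + 2 * s))

/-- The kernel of the `s`-mean over the exterior of the ball of radius `r`, extended by zero to the
ball. The factor `a_{n,s} r^{2s}` of the usual kernel `A_r` is left out: without it the kernels
converge to `fracLaplacianKernel s` as `r → 0`. -/
noncomputable def sMeanKernel (s r : ℝ) : E → ℝ :=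
  {y | r < ‖y‖}.indicator fun y => (‖y‖ ^ 2 - r ^ 2) ^ (-s) * ‖y‖ ^ (-(finrank ℝ E : ℝ))

theorem fracLaplacianKernel_nonneg : 0 ≤ fracLaplacianKernel s y := by
  unfold fracLaplacianKernel
  positivity

theorem fracLaplacianKernel_neg (s : ℝ) (y : E) :
    fracLaplacianKernel s (-y) = fracLaplacianKernel s y := by
  simp only [fracLaplacianKernel, norm_neg]

theorem fracLaplacianKernel_eq_mul (hy : y ≠ 0) :
    fracLaplacianKernel s y = (‖y‖ ^ 2) ^ (-s) * ‖y‖ ^ (-(finrank ℝ E : ℝ)) := by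
  rw [fracLaplacianKernel, ← Real.rpow_natCast, ← Real.rpow_mul (norm_nonneg y),
    ← Real.rpow_add (norm_pos_iff.2 hy)]
  congr 1
  push_cast
  ring

@[fun_prop]
theorem measurable_fracLaplacianKernel [MeasurableSpace E] [BorelSpace E] :
    Measurable (fracLaplacianKernel s : E → ℝ) := by
  unfold fracLaplacianKernel
  fun_prop

theorem sMeanKernel_of_lt (h : r < ‖y‖) :
    sMeanKernel s r y = (‖y‖ ^ 2 - r ^ 2) ^ (-s) * ‖y‖ ^ (-(finrank ℝ E : ℝ)) :=
  indicator_of_mem (s := {y : E | r < ‖y‖}) h _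

theorem sMeanKernel_of_le (h : ‖y‖ ≤ r) : sMeanKernel s r y = 0 :=
  indicator_of_notMem (s := {y : E | r < ‖y‖}) h.not_gt _

theorem sMeanKernel_neg (s r : ℝ) (y : E) : sMeanKernel s r (-y) = sMeanKernel s r y := by
  simp only [sMeanKernel, indicator, mem_ofPred_eq, norm_neg]

theorem sMeanKernel_pos (hr : 0 ≤ r) (h : r < ‖y‖) : 0 < sMeanKernel s r y := by
  rw [sMeanKernel_of_lt h]
  exact mul_pos (Real.rpow_pos_of_pos (sub_pos.2 (by gcongr)) _)
    (Real.rpow_pos_of_pos (hr.trans_lt h) _)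

theorem sMeanKernel_nonneg (hr : 0 ≤ r) : 0 ≤ sMeanKernel s r y := by
  rcases lt_or_ge r ‖y‖ with h | h
  · exact (sMeanKernel_pos hr h).le
  · exact (sMeanKernel_of_le h).ge

@[fun_prop]
theorem measurable_sMeanKernel [MeasurableSpace E] [BorelSpace E] :
    Measurable (sMeanKernel s r : E → ℝ) :=
  Measurable.indicator (by fun_prop) (measurableSet_setOf_lt_norm r)

theorem sMeanKernel_le_of_two_mul_lt (hs : 0 ≤ s) (hr : 0 ≤ r) (h : 2 * r < ‖y‖) :
    sMeanKernel s r y ≤ 4 ^ s * fracLaplacianKernel s y := by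
  have hy : 0 < ‖y‖ := by linarith
  have hquarter : 4⁻¹ * ‖y‖ ^ 2 ≤ ‖y‖ ^ 2 - r ^ 2 := by nlinarith
  rw [sMeanKernel_of_lt (by linarith), fracLaplacianKernel_eq_mul (norm_pos_iff.1 hy), ← mul_assoc]
  gcongr
  calc (‖y‖ ^ 2 - r ^ 2) ^ (-s) ≤ (4⁻¹ * ‖y‖ ^ 2) ^ (-s) :=
        Real.rpow_le_rpow_of_nonpos (by positivity) hquarter (neg_nonpos.2 hs)
    _ = 4 ^ s * (‖y‖ ^ 2) ^ (-s) := by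
        rw [Real.mul_rpow (by positivity) (by positivity), Real.inv_rpow (by positivity),
          Real.rpow_neg (by positivity), inv_inv]

theorem norm_sMeanKernel_smul_le_of_two_mul_lt {F : Type*} [NormedAddCommGroup F] [NormedSpace ℝ F]
    {w : E → F} (hs : 0 ≤ s) (hr : 0 ≤ r) (hy : 2 * r < ‖y‖) :
    ‖sMeanKernel s r y • w y‖ ≤ 4 ^ s * ‖fracLaplacianKernel s y • w y‖ := by
  rw [norm_smul, norm_smul, Real.norm_of_nonneg (sMeanKernel_nonneg hr),
    Real.norm_of_nonneg fracLaplacianKernel_nonneg, ← mul_assoc]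
  gcongr
  exact sMeanKernel_le_of_two_mul_lt hs hr hy

theorem tendsto_sMeanKernel (hy : y ≠ 0) :
    Tendsto (fun r => sMeanKernel s r y) (𝓝[>] 0) (𝓝 (fracLaplacianKernel s y)) := by
  have hpos : 0 < ‖y‖ := norm_pos_iff.2 hy
  have hcont : ContinuousAt
      (fun r : ℝ => (‖y‖ ^ 2 - r ^ 2) ^ (-s) * ‖y‖ ^ (-(finrank ℝ E : ℝ))) 0 :=
    ((by fun_prop : ContinuousAt (fun r : ℝ => ‖y‖ ^ 2 - r ^ 2) 0).rpow_const
      (.inl (by simpa using hy))).mul continuousAt_const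
  have hlim := hcont.tendsto.mono_left (nhdsWithin_le_nhds (s := Ioi 0))
  rw [zero_pow two_ne_zero, sub_zero, ← fracLaplacianKernel_eq_mul hy] at hlim
  refine hlim.congr' ?_
  filter_upwards [Ioo_mem_nhdsGT hpos] with r hr using (sMeanKernel_of_lt hr.2).symm

theorem sMeanKernel_eq_mul_sMeanKernel_one (hr : 0 < r) (y : E) :
    sMeanKernel s r y = r ^ (-(finrank ℝ E + 2 * s)) * sMeanKernel s 1 (r⁻¹ • y) := by
  have hnorm : ‖r⁻¹ • y‖ = r⁻¹ * ‖y‖ := by rw [norm_smul, Real.norm_of_nonneg (by positivity)]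
  have hiff : 1 < ‖r⁻¹ • y‖ ↔ r < ‖y‖ := by rw [hnorm, ← div_eq_inv_mul, one_lt_div hr]
  rcases lt_or_ge r ‖y‖ with h | h
  · have hsq : 0 ≤ ‖y‖ ^ 2 - r ^ 2 := sub_nonneg.2 (by gcongr)
    have hfactor : (r⁻¹ * ‖y‖) ^ 2 - 1 ^ 2 = (r⁻¹) ^ 2 * (‖y‖ ^ 2 - r ^ 2) := by field_simp
    have hpow : r ^ (-(finrank ℝ E + 2 * s)) *
        (((r⁻¹) ^ 2) ^ (-s) * (r⁻¹) ^ (-(finrank ℝ E : ℝ))) = 1 := by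
      rw [← Real.rpow_natCast, ← Real.rpow_mul (by positivity), ← Real.rpow_add (by positivity),
        Real.inv_rpow hr.le, ← Real.rpow_neg hr.le, ← Real.rpow_add hr]
      convert Real.rpow_zero r using 2
      push_cast
      ring
    rw [sMeanKernel_of_lt h, sMeanKernel_of_lt (hiff.2 h), hnorm, hfactor,
      Real.mul_rpow (by positivity) hsq, Real.mul_rpow (by positivity) (norm_nonneg y)]
    linear_combination
      -(‖y‖ ^ 2 - r ^ 2) ^ (-s) * ‖y‖ ^ (-(finrank ℝ E : ℝ)) * hpow
  · rw [sMeanKernel_of_le h, sMeanKernel_of_le (not_lt.1 (mt hiff.1 h.not_gt)), mul_zero]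

theorem sMeanKernel_one_le_indicator (hs : 0 ≤ s) (y : E) :
    sMeanKernel s 1 y ≤ (Ioi 1).indicator (fun t : ℝ => (t - 1) ^ (-s)) ‖y‖ := by
  rcases lt_or_ge 1 ‖y‖ with h | h
  · rw [sMeanKernel_of_lt h, indicator_of_mem (mem_Ioi.2 h), one_pow]
    calc (‖y‖ ^ 2 - 1) ^ (-s) * ‖y‖ ^ (-(finrank ℝ E : ℝ))
        ≤ (‖y‖ ^ 2 - 1) ^ (-s) * 1 := by
          gcongr
          · exact Real.rpow_nonneg (by nlinarith) _
          · exact Real.rpow_le_one_of_one_le_of_nonpos h.le (by simp)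
      _ ≤ (‖y‖ - 1) ^ (-s) := by
          rw [mul_one]
          exact Real.rpow_le_rpow_of_nonpos (by linarith) (by nlinarith) (by linarith)
  · rw [sMeanKernel_of_le h, indicator_of_notMem (by simpa using h)]

end Kernels

section KernelIntegrals

variable {E : Type*} [NormedAddCommGroup E] [NormedSpace ℝ E] [FiniteDimensional ℝ E]
  [MeasurableSpace E] [BorelSpace E] {μ : Measure E} [μ.IsAddHaarMeasure] {s r : ℝ}

theorem integrableOn_fracLaplacianKernel (hs : 0 < s) {ρ : ℝ} (hρ : 0 < ρ) :
    IntegrableOn (fracLaplacianKernel s) {y : E | ρ < ‖y‖} μ := by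
  have hdecay : Integrable (fun y : E => (1 + ‖y‖) ^ (-(finrank ℝ E + 2 * s)) • (1 : ℝ)) μ := by
    simpa only [smul_eq_mul, mul_one] using integrable_one_add_norm (μ := μ) (by linarith)
  refine (integrableOn_norm_rpow_smul_comp_sub_left (by positivity) hdecay 0 hρ).congr
    (.of_forall fun y => ?_)
  simp only [fracLaplacianKernel, smul_eq_mul, mul_one]

theorem integral_sMeanKernel (hr : 0 < r) :
    ∫ y : E, sMeanKernel s r y ∂μ = r ^ (-(2 * s)) * ∫ y : E, sMeanKernel s 1 y ∂μ := by
  simp only [sMeanKernel_eq_mul_sMeanKernel_one hr, integral_const_mul]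
  rw [Measure.integral_comp_inv_smul_of_nonneg μ _ hr.le, smul_eq_mul, ← mul_assoc,
    ← Real.rpow_natCast, ← Real.rpow_add hr]
  congr 2
  ring

variable [Nontrivial E]

theorem integrableOn_ball_sMeanKernel_one (hs0 : 0 ≤ s) (hs1 : s < 1) (ρ : ℝ) :
    IntegrableOn (sMeanKernel s 1) (ball (0 : E) ρ) μ := by
  have hradial : IntegrableOn (fun t : ℝ => (t - 1) ^ (-s)) (Ioc 1 ρ) :=
    ((intervalIntegral.intervalIntegrable_rpow' (a := 0) (b := ρ - 1) (r := -s)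
      (by linarith)).comp_sub_right 1).1.mono_set (by simp)
  have hprofile : IntegrableOn
      (fun t : ℝ => t ^ (finrank ℝ E - 1) • (Ioi 1).indicator (fun t : ℝ => (t - 1) ^ (-s)) t)
      (Ioo 0 ρ) := by
    have hweighted := hradial.continuousOn_mul_of_subset
      (g := fun t : ℝ => t ^ (finrank ℝ E - 1)) (by fun_prop) (isCompact_Icc (a := 1) (b := ρ))
      measurableSet_Ioc Ioc_subset_Icc_self
    rw [← indicator_smul (Ioi 1) (fun t : ℝ => t ^ (finrank ℝ E - 1))]
    exact (integrableOn_indicator_iff measurableSet_Ioi).2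
      (hweighted.mono_set fun t ht => ⟨ht.1, ht.2.2.le⟩)
  refine ((integrableOn_fun_norm_addHaar μ).2 hprofile).mono' (by fun_prop) (.of_forall fun y => ?_)
  rw [Real.norm_of_nonneg (sMeanKernel_nonneg zero_le_one)]
  exact sMeanKernel_one_le_indicator hs0 y

theorem integrable_sMeanKernel_one (hs0 : 0 < s) (hs1 : s < 1) :
    Integrable (sMeanKernel s 1 : E → ℝ) μ := by
  have hfar : IntegrableOn (sMeanKernel s 1) {y : E | 2 < ‖y‖} μ := by
    refine ((integrableOn_fracLaplacianKernel hs0 two_pos).const_mul (4 ^ s)).mono'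
      (by fun_prop) (ae_restrict_of_forall_mem (measurableSet_setOf_lt_norm 2) fun y hy => ?_)
    rw [Real.norm_of_nonneg (sMeanKernel_nonneg zero_le_one)]
    exact sMeanKernel_le_of_two_mul_lt hs0.le zero_le_one (by rwa [mul_one])
  rw [← integrableOn_univ]
  refine ((integrableOn_ball_sMeanKernel_one hs0.le hs1 3).union hfar).mono_set fun y _ => ?_
  rw [mem_union, mem_ball_zero_iff, mem_ofPred_eq]
  exact (le_or_gt ‖y‖ 2).imp_left fun h => h.trans_lt (by norm_num)

theorem integral_sMeanKernel_one_pos (hs0 : 0 < s) (hs1 : s < 1) :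
    0 < ∫ y : E, sMeanKernel s 1 y ∂μ := by
  have hopen : IsOpen {y : E | 1 < ‖y‖} := isOpen_lt continuous_const continuous_norm
  refine (integral_pos_iff_support_of_nonneg (fun y => sMeanKernel_nonneg zero_le_one)
    (integrable_sMeanKernel_one hs0 hs1)).2 ?_
  exact (hopen.measure_pos μ (NormedSpace.exists_lt_norm ℝ E 1)).trans_le
    (measure_mono fun y hy => (sMeanKernel_pos zero_le_one hy).ne')

theorem integrable_sMeanKernel (hs0 : 0 < s) (hs1 : s < 1) (hr : 0 < r) :
    Integrable (sMeanKernel s r : E → ℝ) μ := by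
  simp only [funext (sMeanKernel_eq_mul_sMeanKernel_one hr)]
  exact ((integrable_sMeanKernel_one hs0 hs1).comp_smul (inv_ne_zero hr.ne')).const_mul _

theorem integral_sMeanKernel_pos (hs0 : 0 < s) (hs1 : s < 1) (hr : 0 < r) :
    0 < ∫ y : E, sMeanKernel s r y ∂μ := by
  rw [integral_sMeanKernel hr]
  exact mul_pos (Real.rpow_pos_of_pos hr _) (integral_sMeanKernel_one_pos hs0 hs1)

end KernelIntegrals

section Truncation

variable {E F : Type*} [NormedAddCommGroup E] [MeasurableSpace E] [BorelSpace E]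
  [NormedAddCommGroup F] [NormedSpace ℝ F] {μ : Measure E}

theorem tendsto_setIntegral_setOf_lt_norm [NullSingletonClass μ] {f : E → F} (hf : Integrable f μ) :
    Tendsto (fun r => ∫ y in {y | r < ‖y‖}, f y ∂μ) (𝓝[>] 0) (𝓝 (∫ y, f y ∂μ)) := by
  have hcover : AECover μ (𝓝[>] 0) fun r : ℝ => {y : E | r < ‖y‖} := by
    refine ⟨?_, measurableSet_setOf_lt_norm⟩
    filter_upwards [ae_iff.2 (by simp : μ {y | ¬y ≠ 0} = 0)] with y hy
    filter_upwards [Ioo_mem_nhdsGT (norm_pos_iff.2 hy)] with r hr using hr.2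
  exact hcover.integral_tendsto_of_countably_generated hf

theorem isNegInvariant_restrict_setOf_lt_norm (μ : Measure E) [μ.IsNegInvariant] (r : ℝ) :
    (μ.restrict {y | r < ‖y‖}).IsNegInvariant := by
  refine ⟨?_⟩
  have hmap := Measure.restrict_map (μ := μ) measurable_neg (measurableSet_setOf_lt_norm (E := E) r)
  have hpre : Neg.neg ⁻¹' {y : E | r < ‖y‖} = {y | r < ‖y‖} := by ext y; simp
  rw [hpre, Measure.map_neg_eq_self] at hmap
  exact hmap.symm

variable [μ.IsNegInvariant] {k : E → ℝ} {w : E → F}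

theorem integrable_even_smul_add_comp_neg (hk : ∀ y, k (-y) = k y)
    (hw : Integrable (fun y => k y • w y) μ) :
    Integrable (fun y => k y • (w y + w (-y))) μ := by
  simp only [smul_add]
  exact hw.add (by simpa only [hk] using hw.comp_neg)

theorem integral_even_smul_add_comp_neg (hk : ∀ y, k (-y) = k y)
    (hw : Integrable (fun y => k y • w y) μ) :
    ∫ y, k y • (w y + w (-y)) ∂μ = (2 : ℝ) • ∫ y, k y • w y ∂μ := by
  have hreflect : ∫ y, k y • w (-y) ∂μ = ∫ y, k y • w y ∂μ := by
    simpa only [hk] using integral_neg_eq_self (fun y => k y • w y) μ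
  simp only [smul_add]
  rw [integral_add hw (by simpa only [hk] using hw.comp_neg), hreflect, two_smul]

end Truncation

section Convergence

variable {E F : Type*} [NormedAddCommGroup E]

theorem eventually_forall_norm_le_two_mul {P : E → Prop} (hP : ∀ᶠ y in 𝓝 0, P y) :
    ∀ᶠ r in 𝓝[>] (0 : ℝ), ∀ y, ‖y‖ ≤ 2 * r → P y := by
  obtain ⟨δ, hδ, hball⟩ := eventually_nhds_iff_ball.1 hP
  filter_upwards [Ioo_mem_nhdsGT (half_pos hδ)] with r hr y hy
  exact hball y (mem_ball_zero_iff.2 (by linarith [hr.2]))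

variable [NormedSpace ℝ E] [FiniteDimensional ℝ E] [Nontrivial E] [MeasurableSpace E]
  [BorelSpace E] [NormedAddCommGroup F] [NormedSpace ℝ F]
  {μ : Measure E} [μ.IsAddHaarMeasure] {s r β : ℝ} {w : E → F}

theorem integrable_fracLaplacianKernel_smul (hw : AEStronglyMeasurable w μ) (hβ : 2 * s < β)
    (hO : w =O[𝓝 0] fun y => ‖y‖ ^ β)
    (hfar : ∀ ρ > 0, IntegrableOn (fun y => fracLaplacianKernel s y • w y) {y | ρ < ‖y‖} μ) :
    Integrable (fun y => fracLaplacianKernel s y • w y) μ := by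
  obtain ⟨C, hC, hbound⟩ := hO.exists_nonneg
  obtain ⟨δ, hδ, hball⟩ := eventually_nhds_iff_ball.1 hbound.bound
  have hnear : IntegrableOn (fun y => fracLaplacianKernel s y • w y) (ball 0 δ) μ := by
    refine integrableOn_ball_of_norm_le_rpow (C := C) (α := finrank ℝ E + 2 * s - β)
      Module.finrank_pos (by linarith)
      (ae_restrict_of_forall_mem measurableSet_ball fun y hy => ?_)
      (measurable_fracLaplacianKernel.aestronglyMeasurable.smul hw)
    have hwy := hball y hy
    rw [Real.norm_of_nonneg (by positivity)] at hwy
    calc ‖fracLaplacianKernel s y • w y‖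
        = ‖y‖ ^ (-(finrank ℝ E + 2 * s)) * ‖w y‖ := by
          rw [norm_smul, Real.norm_of_nonneg fracLaplacianKernel_nonneg, fracLaplacianKernel]
      _ ≤ ‖y‖ ^ (-(finrank ℝ E + 2 * s)) * (C * ‖y‖ ^ β) := by gcongr
      _ = C * (‖y‖ ^ (-(finrank ℝ E + 2 * s)) * ‖y‖ ^ β) := by ring
      _ ≤ C * ‖y‖ ^ (-(finrank ℝ E + 2 * s) + β) := by
          gcongr
          exact Real.le_rpow_add (norm_nonneg y) _ _
      _ = C * ‖y‖ ^ (-(finrank ℝ E + 2 * s - β)) := by ring_nf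
  rw [← integrableOn_univ]
  refine (hnear.union (hfar (δ / 2) (half_pos hδ))).mono_set fun y _ => ?_
  rw [mem_union, mem_ball_zero_iff, mem_ofPred_eq]
  exact (le_or_gt ‖y‖ (δ / 2)).imp_left fun h => h.trans_lt (half_lt_self hδ)

theorem integrable_sMeanKernel_smul (hs0 : 0 < s) (hs1 : s < 1) (hr : 0 < r)
    (hw : AEStronglyMeasurable w μ) {B : ℝ} (hB : ∀ y, ‖y‖ ≤ 2 * r → ‖w y‖ ≤ B)
    (hfar : IntegrableOn (fun y => fracLaplacianKernel s y • w y) {y | 2 * r < ‖y‖} μ) :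
    Integrable (fun y => sMeanKernel s r y • w y) μ := by
  have hmeas : AEStronglyMeasurable (fun y => sMeanKernel s r y • w y) μ :=
    measurable_sMeanKernel.aestronglyMeasurable.smul hw
  have hS := measurableSet_setOf_lt_norm (E := E) (2 * r)
  rw [← integrableOn_univ, ← union_compl_self {y : E | 2 * r < ‖y‖}, integrableOn_union]
  constructor
  · exact (hfar.norm.const_mul (4 ^ s)).mono' hmeas.restrict
      (ae_restrict_of_forall_mem hS fun y hy =>
        norm_sMeanKernel_smul_le_of_two_mul_lt hs0.le hr.le hy)
  · refine ((integrable_sMeanKernel hs0 hs1 hr).integrableOn.mul_const B).mono' hmeas.restrict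
      (ae_restrict_of_forall_mem hS.compl fun y hy => ?_)
    have hnonneg : 0 ≤ sMeanKernel s r y := sMeanKernel_nonneg hr.le
    rw [norm_smul, Real.norm_of_nonneg hnonneg]
    gcongr
    exact hB y (not_lt.1 hy)

theorem eventually_integrable_sMeanKernel_smul (hs0 : 0 < s) (hs1 : s < 1)
    (hw : AEStronglyMeasurable w μ) (hO : w =O[𝓝 0] fun _ => (1 : ℝ))
    (hfar : ∀ ρ > 0, IntegrableOn (fun y => fracLaplacianKernel s y • w y) {y | ρ < ‖y‖} μ) :
    ∀ᶠ r in 𝓝[>] 0, Integrable (fun y => sMeanKernel s r y • w y) μ := by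
  obtain ⟨B, hB⟩ := hO.bound
  filter_upwards [eventually_forall_norm_le_two_mul hB, self_mem_nhdsWithin] with r hBr hr
  have hr : 0 < r := hr
  exact integrable_sMeanKernel_smul hs0 hs1 hr hw hBr (hfar _ (by positivity))

theorem tendsto_setIntegral_sMeanKernel_smul (hs : 0 ≤ s) (hw : AEStronglyMeasurable w μ)
    (hint : Integrable (fun y => fracLaplacianKernel s y • w y) μ) :
    Tendsto (fun r => ∫ y in {y | 2 * r < ‖y‖}, sMeanKernel s r y • w y ∂μ) (𝓝[>] 0)
      (𝓝 (∫ y, fracLaplacianKernel s y • w y ∂μ)) := by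
  simp only [← integral_indicator (measurableSet_setOf_lt_norm _)]
  refine tendsto_integral_filter_of_dominated_convergence
    (fun y => 4 ^ s * ‖fracLaplacianKernel s y • w y‖) (.of_forall fun r => ?_) ?_
    (hint.norm.const_mul _) ?_
  · exact (measurable_sMeanKernel.aestronglyMeasurable.smul hw).indicator
      (measurableSet_setOf_lt_norm _)
  · filter_upwards [self_mem_nhdsWithin] with r (hr : 0 < r)
    refine .of_forall fun y => ?_
    rw [norm_indicator_eq_indicator_norm]
    exact indicator_le' (fun y hy => norm_sMeanKernel_smul_le_of_two_mul_lt hs hr.le hy)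
      (fun y _ => by positivity) y
  · filter_upwards [ae_iff.2 (by simp : μ {y | ¬y ≠ 0} = 0)] with y hy
    refine ((tendsto_sMeanKernel hy).smul_const (w y)).congr' ?_
    filter_upwards [Ioo_mem_nhdsGT (half_pos (norm_pos_iff.2 hy))] with r hr
    exact (indicator_of_mem (s := {y : E | 2 * r < ‖y‖})
      (by rw [mem_ofPred_eq]; linarith [hr.2]) fun y => sMeanKernel s r y • w y).symm

theorem norm_setIntegral_compl_sMeanKernel_smul_le (hs0 : 0 < s) (hs1 : s < 1) (hr : 0 < r)
    {B : ℝ} (hB : ∀ y, ‖y‖ ≤ 2 * r → ‖w y‖ ≤ B) :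
    ‖∫ y in {y | 2 * r < ‖y‖}ᶜ, sMeanKernel s r y • w y ∂μ‖ ≤
      r ^ (-(2 * s)) * (∫ y : E, sMeanKernel s 1 y ∂μ) * B := by
  have hB0 : 0 ≤ B := (norm_nonneg _).trans (hB 0 (by rw [norm_zero]; positivity))
  have hint : Integrable (fun y : E => sMeanKernel s r y * B) μ :=
    (integrable_sMeanKernel hs0 hs1 hr).mul_const B
  calc ‖∫ y in {y | 2 * r < ‖y‖}ᶜ, sMeanKernel s r y • w y ∂μ‖
      ≤ ∫ y in {y : E | 2 * r < ‖y‖}ᶜ, sMeanKernel s r y * B ∂μ := by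
        refine norm_integral_le_of_norm_le hint.integrableOn (ae_restrict_of_forall_mem
          (measurableSet_setOf_lt_norm _).compl fun y hy => ?_)
        have hnonneg : 0 ≤ sMeanKernel s r y := sMeanKernel_nonneg hr.le
        rw [norm_smul, Real.norm_of_nonneg hnonneg]
        gcongr
        exact hB y (not_lt.1 hy)
    _ ≤ ∫ y : E, sMeanKernel s r y * B ∂μ :=
        setIntegral_le_integral hint
          (.of_forall fun y => mul_nonneg (sMeanKernel_nonneg hr.le) hB0)
    _ = r ^ (-(2 * s)) * (∫ y : E, sMeanKernel s 1 y ∂μ) * B := by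
        rw [integral_mul_const, integral_sMeanKernel hr]

theorem tendsto_setIntegral_compl_sMeanKernel_smul (hs0 : 0 < s) (hs1 : s < 1) (hβ : 2 * s < β)
    (hO : w =O[𝓝 0] fun y => ‖y‖ ^ β) :
    Tendsto (fun r => ∫ y in {y | 2 * r < ‖y‖}ᶜ, sMeanKernel s r y • w y ∂μ) (𝓝[>] 0)
      (𝓝 0) := by
  obtain ⟨C, hC, hbound⟩ := hO.exists_nonneg
  have hβ0 : 0 < β := by linarith
  set I := ∫ y : E, sMeanKernel s 1 y ∂μ
  have hlim : Tendsto (fun r : ℝ => r ^ (β - 2 * s) * (I * (C * 2 ^ β))) (𝓝[>] 0) (𝓝 0) := by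
    have hpow := (Real.continuousAt_rpow_const 0 (β - 2 * s)
      (.inr (by linarith))).tendsto.mono_left (nhdsWithin_le_nhds (s := Ioi 0))
    rw [Real.zero_rpow (by linarith)] at hpow
    simpa only [zero_mul] using hpow.mul_const (I * (C * 2 ^ β))
  refine squeeze_zero_norm' ?_ hlim
  filter_upwards [eventually_forall_norm_le_two_mul hbound.bound, self_mem_nhdsWithin]
    with r hCr (hr : 0 < r)
  have hB : ∀ y, ‖y‖ ≤ 2 * r → ‖w y‖ ≤ C * (2 * r) ^ β := fun y hy => by
    refine (hCr y hy).trans ?_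
    rw [Real.norm_of_nonneg (by positivity)]
    gcongr
  refine (norm_setIntegral_compl_sMeanKernel_smul_le hs0 hs1 hr hB).trans_eq ?_
  rw [Real.mul_rpow zero_le_two hr.le, sub_eq_neg_add, Real.rpow_add hr]
  ring

theorem tendsto_integral_sMeanKernel_smul (hs0 : 0 < s) (hs1 : s < 1)
    (hw : AEStronglyMeasurable w μ) (hβ : 2 * s < β) (hO : w =O[𝓝 0] fun y => ‖y‖ ^ β)
    (hint : Integrable (fun y => fracLaplacianKernel s y • w y) μ) :
    Tendsto (fun r => ∫ y, sMeanKernel s r y • w y ∂μ) (𝓝[>] 0)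
      (𝓝 (∫ y, fracLaplacianKernel s y • w y ∂μ)) := by
  have hsum := (tendsto_setIntegral_sMeanKernel_smul hs0.le hw hint).add
    (tendsto_setIntegral_compl_sMeanKernel_smul (μ := μ) hs0 hs1 hβ hO)
  rw [add_zero] at hsum
  refine hsum.congr' ?_
  filter_upwards [eventually_integrable_sMeanKernel_smul hs0 hs1 hw
    (hO.trans (isBigO_norm_rpow_one (by linarith))) fun ρ _ => hint.integrableOn] with r hr using
    integral_add_compl (measurableSet_setOf_lt_norm _) hr

end Convergence

section MeanValue

variable {E F : Type*} [NormedAddCommGroup E] [NormedSpace ℝ E] [MeasurableSpace E]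
  [NormedAddCommGroup F] [NormedSpace ℝ F]

/-- The `s`-mean of `u` over the exterior of the ball of radius `r` around `x`. Dividing by the
total mass of `sMeanKernel s r` supplies the factor `a_{n,s} r^{2s}` missing from that kernel. -/
noncomputable def sMean (μ : Measure E) (s r : ℝ) (u : E → F) (x : E) : F :=
  (∫ y, sMeanKernel s r y ∂μ)⁻¹ • ∫ y, sMeanKernel s r y • u (x - y) ∂μ

/-- `u` is `s`-harmonic at `x`: the fractional Laplacian of `u` at `x` exists as a principal value
and vanishes. -/
def IsSHarmonicAt (μ : Measure E) (s : ℝ) (u : E → F) (x : E) : Prop :=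
  Tendsto (fun r => ∫ y in {y | r < ‖y‖}, fracLaplacianKernel s y • (u x - u (x - y)) ∂μ) (𝓝[>] 0)
    (𝓝 0)

variable [FiniteDimensional ℝ E] [BorelSpace E] {μ : Measure E} [μ.IsAddHaarMeasure] {s : ℝ}

theorem sMean_eq_setIntegral {r : ℝ} (hr : 0 < r) (u : E → F) (x : E) :
    sMean μ s r u x = ∫ y in {y | r < ‖y‖},
      ((∫ z in {z : E | 1 < ‖z‖}, (‖z‖ ^ 2 - 1) ^ (-s) * ‖z‖ ^ (-(finrank ℝ E : ℝ)) ∂μ)⁻¹ *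
        r ^ (2 * s) / ((‖y‖ ^ 2 - r ^ 2) ^ s * ‖y‖ ^ (finrank ℝ E : ℝ))) • u (x - y) ∂μ := by
  have hone : ∫ z in {z : E | 1 < ‖z‖}, (‖z‖ ^ 2 - 1) ^ (-s) * ‖z‖ ^ (-(finrank ℝ E : ℝ)) ∂μ =
      ∫ z : E, sMeanKernel s 1 z ∂μ := by
    simp only [sMeanKernel, one_pow, integral_indicator (measurableSet_setOf_lt_norm (E := E) 1)]
  rw [sMean, hone, integral_sMeanKernel hr, mul_inv, Real.rpow_neg hr.le, inv_inv,
    ← integral_smul, ← integral_indicator (measurableSet_setOf_lt_norm r)]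
  congr 1 with y
  rcases lt_or_ge r ‖y‖ with h | h
  · have hsq : 0 ≤ ‖y‖ ^ 2 - r ^ 2 := sub_nonneg.2 (by gcongr)
    rw [indicator_of_mem (mem_ofPred_eq.symm ▸ h), sMeanKernel_of_lt h, Real.rpow_neg hsq,
      Real.rpow_neg (norm_nonneg y), smul_smul]
    congr 1
    rw [div_eq_mul_inv, mul_inv]
    ring
  · rw [sMeanKernel_of_le h, zero_smul, smul_zero, indicator_of_notMem (by simpa using h)]

variable [Nontrivial E] {β : ℝ} {w : E → F}

theorem integral_fracLaplacianKernel_smul_eq_zero (hs0 : 0 < s) (hs1 : s < 1)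
    (hw : AEStronglyMeasurable w μ) (hβ : 2 * s < β) (hO : w =O[𝓝 0] fun y => ‖y‖ ^ β)
    (hint : Integrable (fun y => fracLaplacianKernel s y • w y) μ)
    (hzero : ∀ᶠ r in 𝓝[>] 0, ∫ y, sMeanKernel s r y • w y ∂μ = 0) :
    ∫ y, fracLaplacianKernel s y • w y ∂μ = 0 :=
  tendsto_nhds_unique (tendsto_integral_sMeanKernel_smul hs0 hs1 hw hβ hO hint)
    (tendsto_const_nhds.congr' (hzero.mono fun _ hr => hr.symm))

theorem tendsto_setIntegral_fracLaplacianKernel_smul (hs0 : 0 < s) (hs1 : s < 1)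
    (hw : AEStronglyMeasurable w μ)
    (hfar : ∀ ρ > 0, IntegrableOn (fun y => fracLaplacianKernel s y • w y) {y | ρ < ‖y‖} μ)
    (hβ : 2 * s < β) {L : E →L[ℝ] F} (hL : (fun y => w y - L y) =O[𝓝 0] fun y => ‖y‖ ^ β)
    (hzero : ∀ᶠ r in 𝓝[>] 0, ∫ y, sMeanKernel s r y • w y ∂μ = 0) :
    Tendsto (fun r => ∫ y in {y | r < ‖y‖}, fracLaplacianKernel s y • w y ∂μ) (𝓝[>] 0)
      (𝓝 0) := by
  set g : E → F := fun y => w y + w (-y)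
  have hg : AEStronglyMeasurable g μ :=
    hw.add (hw.comp_quasiMeasurePreserving (Measure.measurePreserving_neg μ).quasiMeasurePreserving)
  have hgO : g =O[𝓝 0] fun y => ‖y‖ ^ β := isBigO_add_comp_neg hL
  have hwO := isBigO_one_of_isBigO_sub_clm (by linarith) hL
  have hsymm : ∀ r > 0,
      ∫ y in {y | r < ‖y‖}, fracLaplacianKernel s y • g y ∂μ =
        (2 : ℝ) • ∫ y in {y | r < ‖y‖}, fracLaplacianKernel s y • w y ∂μ := fun r hr =>
    have := isNegInvariant_restrict_setOf_lt_norm μ r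
    integral_even_smul_add_comp_neg (fracLaplacianKernel_neg s) (hfar r hr)
  have hint : Integrable (fun y => fracLaplacianKernel s y • g y) μ :=
    integrable_fracLaplacianKernel_smul hg hβ hgO fun r hr =>
      have := isNegInvariant_restrict_setOf_lt_norm μ r
      integrable_even_smul_add_comp_neg (fracLaplacianKernel_neg s) (hfar r hr)
  have hgzero : ∫ y, fracLaplacianKernel s y • g y ∂μ = 0 := by
    refine integral_fracLaplacianKernel_smul_eq_zero hs0 hs1 hg hβ hgO hint ?_
    filter_upwards [hzero, eventually_integrable_sMeanKernel_smul hs0 hs1 hw hwO hfar]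
      with r hr hint_r
    rw [integral_even_smul_add_comp_neg (sMeanKernel_neg s r) hint_r, hr, smul_zero]
  have hlim := (tendsto_setIntegral_setOf_lt_norm hint).const_smul (2⁻¹ : ℝ)
  rw [hgzero, smul_zero] at hlim
  refine hlim.congr' ?_
  filter_upwards [self_mem_nhdsWithin] with r hr
  rw [hsymm r hr, inv_smul_smul₀ two_ne_zero]

theorem integral_sMeanKernel_smul_sub_eq_zero [CompleteSpace F] (hs0 : 0 < s) (hs1 : s < 1)
    {r : ℝ} (hr : 0 < r) {u : E → F} {x : E}
    (hint : Integrable (fun y => sMeanKernel s r y • (u x - u (x - y))) μ)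
    (hmean : sMean μ s r u x = u x) :
    ∫ y, sMeanKernel s r y • (u x - u (x - y)) ∂μ = 0 := by
  have hconst : Integrable (fun y => sMeanKernel s r y • u x) μ :=
    (integrable_sMeanKernel hs0 hs1 hr).smul_const (u x)
  have hu : Integrable (fun y => sMeanKernel s r y • u (x - y)) μ :=
    (hconst.sub hint).congr (.of_forall fun y => by
      simp only [Pi.sub_apply, smul_sub, sub_sub_cancel])
  rw [sMean, inv_smul_eq_iff₀ (integral_sMeanKernel_pos hs0 hs1 hr).ne'] at hmean
  simp only [smul_sub]
  rw [integral_sub hconst hu, integral_smul_const, hmean, sub_self]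

theorem sMeanValue_implies_sHarmonic_general [CompleteSpace F] (hs : s ∈ Ioo 0 1) {u : E → F}
    {x : E} (hum : AEStronglyMeasurable u μ)
    (hL1s : Integrable (fun y => ‖u y‖ / (1 + ‖y‖ ^ (finrank ℝ E + 2 * s))) μ)
    (hβ : 2 * s < β) {L : E →L[ℝ] F}
    (hL : (fun y => u y - u x - L (y - x)) =O[𝓝 x] fun y => ‖y - x‖ ^ β)
    (hmean : ∀ᶠ r in 𝓝[>] 0, sMean μ s r u x = u x) :
    IsSHarmonicAt μ s u x := by
  obtain ⟨hs0, hs1⟩ := hs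
  have hw : AEStronglyMeasurable (fun y => u x - u (x - y)) μ :=
    aestronglyMeasurable_const.sub
      (hum.comp_quasiMeasurePreserving (quasiMeasurePreserving_sub_left μ x))
  have hfar : ∀ ρ > 0, IntegrableOn (fun y => fracLaplacianKernel s y • (u x - u (x - y)))
      {y | ρ < ‖y‖} μ := fun ρ hρ => by
    simp only [smul_sub]
    exact ((integrableOn_fracLaplacianKernel hs0 hρ).smul_const (u x)).sub
      (integrableOn_norm_rpow_smul_comp_sub_left (by positivity)
        (integrable_one_add_norm_rpow_smul (by positivity) hum hL1s) x hρ)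
  have hwL := isBigO_sub_comp_sub_left hL
  refine tendsto_setIntegral_fracLaplacianKernel_smul hs0 hs1 hw hfar hβ hwL ?_
  filter_upwards [hmean, self_mem_nhdsWithin, eventually_integrable_sMeanKernel_smul hs0 hs1 hw
    (isBigO_one_of_isBigO_sub_clm (by linarith) hwL) hfar] with r hr hr0 hint
  exact integral_sMeanKernel_smul_sub_eq_zero hs0 hs1 hr0 hint hr

end MeanValue

/-- The `s`-mean value property implies `s`-harmonicity.  If
`u ∈ L¹_s(ℝⁿ)` has the required Hölder regularity near `x` and satisfies the
`s`-mean value identity `u(x) = ∫_{|y|>r} A_r(y) u(x−y) dy` for all small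
`r > 0`, then the principal value `lim_{r→0⁺} ∫_{|y|>r} (u(x) − u(x−y))/|y|^{n+2s} dy`
exists and equals `0`, i.e. `u` is `s`-harmonic at `x`. -/
theorem sMeanValue_implies_sHarmonic
    (n : ℕ) (hn : 1 ≤ n) (s : ℝ) (hs : s ∈ Set.Ioo (0:ℝ) 1)
    (u : EuclideanSpace ℝ (Fin n) → ℝ) (x : EuclideanSpace ℝ (Fin n))
    (hloc : MeasureTheory.LocallyIntegrable u)
    (hL1s : MeasureTheory.Integrable (fun y : EuclideanSpace ℝ (Fin n) =>
      |u y| / (1 + ‖y‖ ^ ((n : ℝ) + 2 * s))))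
    (hreg : ∃ δ : ℝ, 0 < δ ∧ ∃ ε₀ : ℝ, 0 < ε₀ ∧
      ((2 * s + ε₀ ≤ 1 ∧
          ∃ C : ℝ, ∀ y ∈ Metric.ball x δ, ∀ z ∈ Metric.ball x δ,
            |u y - u z| ≤ C * ‖y - z‖ ^ (2 * s + ε₀)) ∨
        (1 < 2 * s + ε₀ ∧ 2 * s + ε₀ ≤ 2 ∧
          (∀ y ∈ Metric.ball x δ, DifferentiableAt ℝ u y) ∧
          ∃ C : ℝ, ∀ y ∈ Metric.ball x δ, ∀ z ∈ Metric.ball x δ,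
            ‖fderiv ℝ u y - fderiv ℝ u z‖ ≤ C * ‖y - z‖ ^ (2 * s + ε₀ - 1))))
    (hmean : ∃ r₀ : ℝ, 0 < r₀ ∧ ∀ r : ℝ, 0 < r → r < r₀ →
      u x = ∫ y in {y : EuclideanSpace ℝ (Fin n) | r < ‖y‖},
        ((∫ z in {z : EuclideanSpace ℝ (Fin n) | 1 < ‖z‖},
            (‖z‖ ^ 2 - 1) ^ (-s) * ‖z‖ ^ (-(n : ℝ)))⁻¹ *
          r ^ (2 * s) / ((‖y‖ ^ 2 - r ^ 2) ^ s * ‖y‖ ^ (n : ℝ))) * u (x - y)) :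
    Filter.Tendsto
      (fun r : ℝ => ∫ y in {y : EuclideanSpace ℝ (Fin n) | r < ‖y‖},
        (u x - u (x - y)) / ‖y‖ ^ ((n : ℝ) + 2 * s))
      (𝓝[>] (0:ℝ)) (𝓝 0) := by
  have : NeZero n := ⟨by omega⟩
  obtain ⟨δ, hδ, ε₀, hε₀, hholder⟩ := hreg
  obtain ⟨r₀, hr₀, hmean⟩ := hmean
  obtain ⟨L, hL⟩ := exists_isBigO_taylor_of_holder_ball (u := u) (x := x) (α := 2 * s + ε₀) hδ
    (hholder.imp And.right fun ⟨h1, _, h⟩ => ⟨h1.le, h⟩)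
  have hsMean : ∀ᶠ r in 𝓝[>] 0, sMean volume s r u x = u x := by
    filter_upwards [Ioo_mem_nhdsGT hr₀] with r hr
    rw [hmean r hr.1 hr.2, sMean_eq_setIntegral hr.1, finrank_euclideanSpace_fin]
    rfl
  have hharm := sMeanValue_implies_sHarmonic_general hs hloc.aestronglyMeasurable
    (by rwa [finrank_euclideanSpace_fin]) (by linarith) hL hsMean
  simpa only [IsSHarmonicAt, fracLaplacianKernel, finrank_euclideanSpace_fin, smul_eq_mul,
    Real.rpow_neg (norm_nonneg _), ← div_eq_inv_mul] using hharm
end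

section
/- (Comparison principle for the fractional Laplacian.) Let n ≥ 1, s ∈ (0,1), let Ω ⊂ ℝⁿ be a bounded open set, and let u, v : ℝⁿ → ℝ be bounded and continuous. Set w := u − v and assume that for every x ∈ Ω the function y ↦ (2w(x) − w(x+y) − w(x−y))/|y|^{n+2s} is Lebesgue integrable on ℝⁿ with ∫_{ℝⁿ} (2w(x) − w(x+y) − w(x−y))/|y|^{n+2s} dy ≥ 0 (i.e., (−Δ)^s u ≥ (−Δ)^s v in Ω), and that u(x) ≥ v(x) for every x ∈ ℝⁿ ∖ Ω. Then u ≥ v on all of ℝⁿ. -/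
open MeasureTheory Filter Metric Set
open scoped Topology

/-!
If `w = u - v` were negative somewhere, then, being nonnegative off the bounded set `Ω`, it would
attain its global minimum at some `x₀ ∈ Ω`. There the integrand `(2 w(x₀) - w(x₀+y) - w(x₀-y)) k(y)`
is nonpositive while its integral is nonnegative, so it vanishes for almost every `y`. But for `y`
large both `x₀ + y` and `x₀ - y` lie off `Ω`, so the integrand is at most `2 w(x₀) k(y)`, which is
negative on a set of positive measure because `k` does not vanish almost everywhere far out.
-/

section Minimum

variable {X α : Type*} [TopologicalSpace X] [LinearOrder α] {Ω : Set X} {w : X → α} {c : α} {x : X}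

theorem exists_mem_lt_forall_le_of_le_compl (hΩ : IsCompact (closure Ω))
    (hw : LowerSemicontinuousOn w (closure Ω)) (hout : ∀ z ∉ Ω, c ≤ w z) (hx : w x < c) :
    ∃ x₀ ∈ Ω, w x₀ < c ∧ ∀ z, w x₀ ≤ w z := by
  have mem_of_lt {z : X} (hz : w z < c) : z ∈ Ω := not_imp_comm.1 (hout z) hz.not_ge
  obtain ⟨x₀, -, hmin⟩ := hw.exists_isMinOn ⟨x, subset_closure (mem_of_lt hx)⟩ hΩ
  have hx₀ : w x₀ < c := (hmin (subset_closure (mem_of_lt hx))).trans_lt hx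
  refine ⟨x₀, mem_of_lt hx₀, hx₀, fun z ↦ ?_⟩
  by_cases hz : z ∈ Ω
  · exact hmin (subset_closure hz)
  · exact hx₀.le.trans (hout z hz)

end Minimum

section Supersolution

variable {E : Type*}

/-- The second difference of `w` at `x` in the direction `y`, with the sign of `-Δ`: it is
nonpositive at a minimum. -/
def secondDifference [AddCommGroup E] (w : E → ℝ) (x y : E) : ℝ :=
  2 * w x - w (x + y) - w (x - y)

/-- `w` is a supersolution at `x` of the nonlocal operator with kernel `k`, whose value at `x` is
the integral of `secondDifference w x y * k y`; absolute convergence is part of the condition. The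
kernel `k y = (‖y‖ ^ (n + 2 * s))⁻¹` gives `(-Δ)^s w x ≥ 0`. -/
def IsNonlocalSupersolutionAt [AddCommGroup E] [MeasurableSpace E] (μ : Measure E) (k : E → ℝ)
    (w : E → ℝ) (x : E) : Prop :=
  Integrable (fun y ↦ secondDifference w x y * k y) μ ∧
    0 ≤ ∫ y, secondDifference w x y * k y ∂μ

section AddCommGroup

variable [AddCommGroup E] {w : E → ℝ} {x : E}

theorem secondDifference_nonpos_of_forall_le (hmin : ∀ z, w x ≤ w z) (y : E) :
    secondDifference w x y ≤ 0 := by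
  unfold secondDifference
  linarith [hmin (x + y), hmin (x - y)]

theorem secondDifference_neg_of_neg_of_nonneg (hx : w x < 0) {y : E} (hadd : 0 ≤ w (x + y))
    (hsub : 0 ≤ w (x - y)) : secondDifference w x y < 0 := by
  unfold secondDifference
  linarith

theorem IsNonlocalSupersolutionAt.ae_eq_zero_of_forall_le [MeasurableSpace E] {μ : Measure E}
    {k : E → ℝ} (h : IsNonlocalSupersolutionAt μ k w x) (hk : 0 ≤ᵐ[μ] k)
    (hmin : ∀ z, w x ≤ w z) : ∀ᵐ y ∂μ, secondDifference w x y * k y = 0 := by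
  obtain ⟨hint, hnonneg⟩ := h
  have hle : (fun y ↦ secondDifference w x y * k y) ≤ᵐ[μ] 0 := by
    filter_upwards [hk] with y hy
    exact mul_nonpos_of_nonpos_of_nonneg (secondDifference_nonpos_of_forall_le hmin y) hy
  have hzero : ∫ y, secondDifference w x y * k y ∂μ = 0 :=
    le_antisymm (integral_nonpos_of_ae hle) hnonneg
  exact (integral_eq_iff_of_ae_le hint (integrable_zero _ _ _) hle).1 (by simpa using hzero)

end AddCommGroup

theorem exists_forall_lt_norm_add_sub_notMem [SeminormedAddCommGroup E]
    {Ω : Set E} (hΩ : Bornology.IsBounded Ω) (x : E) :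
    ∃ R : ℝ, ∀ y, R < ‖y‖ → x + y ∉ Ω ∧ x - y ∉ Ω := by
  obtain ⟨R, hR⟩ := hΩ.subset_closedBall x
  refine ⟨R, fun y hy ↦ ⟨fun h ↦ hy.not_ge ?_, fun h ↦ hy.not_ge ?_⟩⟩
  · simpa only [mem_closedBall, dist_self_add_left] using hR h
  · simpa only [mem_closedBall, dist_self_sub_left] using hR h

theorem nonneg_of_isNonlocalSupersolutionAt [SeminormedAddCommGroup E] [ProperSpace E]
    [MeasurableSpace E] {μ : Measure E} {k w : E → ℝ} {Ω : Set E} (hk : 0 ≤ᵐ[μ] k)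
    (hfar : ∀ R : ℝ, ∃ᵐ y ∂μ, R < ‖y‖ ∧ 0 < k y) (hΩ : Bornology.IsBounded Ω)
    (hw : LowerSemicontinuousOn w (closure Ω))
    (hsup : ∀ x ∈ Ω, IsNonlocalSupersolutionAt μ k w x) (hext : ∀ x ∉ Ω, 0 ≤ w x) (x : E) :
    0 ≤ w x := by
  by_contra! hx
  obtain ⟨x₀, hx₀Ω, hx₀, hmin⟩ :=
    exists_mem_lt_forall_le_of_le_compl hΩ.isCompact_closure hw hext hx
  obtain ⟨R, hR⟩ := exists_forall_lt_norm_add_sub_notMem hΩ x₀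
  have hzero := (hsup x₀ hx₀Ω).ae_eq_zero_of_forall_le hk hmin
  obtain ⟨y, ⟨hyR, hky⟩, hy⟩ := ((hfar R).and_eventually hzero).exists
  obtain ⟨hadd, hsub⟩ := hR y hyR
  have hneg := secondDifference_neg_of_neg_of_nonneg hx₀ (hext _ hadd) (hext _ hsub)
  exact (mul_neg_of_neg_of_pos hneg hky).ne hy

end Supersolution

section PowerKernel

variable {E : Type*} [NormedAddCommGroup E] [NormedSpace ℝ E] [Nontrivial E] [MeasurableSpace E]
  (μ : Measure E) [μ.IsOpenPosMeasure]

theorem frequently_ae_lt_norm (R : ℝ) : ∃ᵐ y ∂μ, R < ‖y‖ :=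
  frequently_ae_iff.2 <| (isOpen_lt continuous_const continuous_norm).measure_ne_zero μ
    (NormedSpace.exists_lt_norm ℝ E R)

theorem frequently_ae_lt_norm_and_inv_norm_rpow_pos (p R : ℝ) :
    ∃ᵐ y ∂μ, R < ‖y‖ ∧ 0 < (‖y‖ ^ p)⁻¹ := by
  refine (frequently_ae_lt_norm μ (max R 0)).mono fun y hy ↦ ?_
  obtain ⟨hR, hpos⟩ := max_lt_iff.1 hy
  exact ⟨hR, inv_pos.2 (Real.rpow_pos_of_pos hpos p)⟩

end PowerKernel

theorem fractional_comparison_principle_general {E : Type*} [SeminormedAddCommGroup E]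
    [ProperSpace E] [MeasurableSpace E] {μ : Measure E} {k u v : E → ℝ} {Ω : Set E}
    (hk : 0 ≤ᵐ[μ] k) (hfar : ∀ R : ℝ, ∃ᵐ y ∂μ, R < ‖y‖ ∧ 0 < k y)
    (hΩ : Bornology.IsBounded Ω) (huv : LowerSemicontinuousOn (u - v) (closure Ω))
    (hsup : ∀ x ∈ Ω, IsNonlocalSupersolutionAt μ k (u - v) x) (hext : ∀ x ∉ Ω, v x ≤ u x)
    (x : E) : v x ≤ u x :=
  sub_nonneg.1 <| nonneg_of_isNonlocalSupersolutionAt hk hfar hΩ huv hsup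
    (fun z hz ↦ sub_nonneg.2 (hext z hz)) x

/-- Comparison principle for the fractional Laplacian.  If `Ω` is
bounded and open, `u, v` are bounded and continuous, `(−Δ)^s (u − v) ≥ 0` in
`Ω` (in the absolutely convergent second-difference sense) and `u ≥ v` outside
`Ω`, then `u ≥ v` on all of `ℝⁿ`. -/
theorem fractional_comparison_principle
    (n : ℕ) (hn : 1 ≤ n) (s : ℝ) (hs : s ∈ Set.Ioo (0:ℝ) 1)
    (Ω : Set (EuclideanSpace ℝ (Fin n))) (hΩo : IsOpen Ω) (hΩb : Bornology.IsBounded Ω)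
    (u v : EuclideanSpace ℝ (Fin n) → ℝ)
    (hubdd : ∃ M : ℝ, ∀ x, |u x| ≤ M) (hucont : Continuous u)
    (hvbdd : ∃ M : ℝ, ∀ x, |v x| ≤ M) (hvcont : Continuous v)
    (hsup : ∀ x ∈ Ω,
      MeasureTheory.Integrable (fun y : EuclideanSpace ℝ (Fin n) =>
        (2 * (u - v) x - (u - v) (x + y) - (u - v) (x - y)) / ‖y‖ ^ ((n : ℝ) + 2 * s)) ∧
      0 ≤ ∫ y : EuclideanSpace ℝ (Fin n),
        (2 * (u - v) x - (u - v) (x + y) - (u - v) (x - y)) / ‖y‖ ^ ((n : ℝ) + 2 * s))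
    (hext : ∀ x ∉ Ω, v x ≤ u x) :
    ∀ x, v x ≤ u x := by
  have : Nonempty (Fin n) := ⟨⟨0, hn⟩⟩
  exact fractional_comparison_principle_general (k := fun y ↦ (‖y‖ ^ ((n : ℝ) + 2 * s))⁻¹)
    (ae_of_all _ fun y ↦ by positivity) (frequently_ae_lt_norm_and_inv_norm_rpow_pos volume _) hΩb
    ((hucont.sub hvcont).lowerSemicontinuous.lowerSemicontinuousOn _)
    (by simpa only [IsNonlocalSupersolutionAt, secondDifference, div_eq_mul_inv] using hsup) hext
end
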